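/- arXiv:2210.13178 — 5 statements merged into one kernel-verified Lean document; each statement's English description precedes it below -/
import Mathlib

section
/- Fix θ₀ > 1 and h ∈ ℝ, set θ_n := θ₀ + h/√n, and let μ_n be the probability measure on ℝ with density proportional to exp( −(1/2)nθ_nφ² + n·log cosh(θ_nφ) ). Then the conditional law of φ given φ > 0 (i.e., μ_n restricted to (0,∞) and normalized), pushed forward under the map φ ↦ √n·(φ − m(θ_n)), converges weakly to the Gaussian distribution N(0, 1/(θ₀ − (1 − m(θ₀)²)·θ₀²)), and moreover all moments converge to the corresponding moments of this Gaussian. -/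
open MeasureTheory ProbabilityTheory Filter

noncomputable def phiDensity (n : ℕ) (θ φ : ℝ) : ℝ :=
  Real.exp (-((n : ℝ) * θ * φ ^ 2) / 2 + (n : ℝ) * Real.log (Real.cosh (θ * φ)))

noncomputable def phiUnnorm (n : ℕ) (θ : ℝ) : Measure ℝ :=
  MeasureTheory.volume.withDensity fun φ => ENNReal.ofReal (phiDensity n θ φ)

/-- The probability measure on `ℝ` with density proportional to `phiDensity`. -/
noncomputable def phiMeasure (n : ℕ) (θ : ℝ) : Measure ℝ :=
  (phiUnnorm n θ Set.univ)⁻¹ • phiUnnorm n θ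

/-- The conditional law of `μ` given `(0,∞)`. -/
noncomputable def condPos (μ : Measure ℝ) : Measure ℝ :=
  (μ (Set.Ioi 0))⁻¹ • μ.restrict (Set.Ioi 0)


namespace CW
open Real Topology Set

lemma hasDerivAt_tanh (x : ℝ) : HasDerivAt Real.tanh (1 - Real.tanh x ^ 2) x := by
  have h : Real.tanh = fun x => Real.sinh x / Real.cosh x := by
    funext y; exact Real.tanh_eq_sinh_div_cosh y
  have hc : Real.cosh x ≠ 0 := (Real.cosh_pos x).ne'
  have := (Real.hasDerivAt_sinh x).div (Real.hasDerivAt_cosh x) hc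
  rw [h]
  refine this.congr_deriv ?_
  simp only
  field_simp

lemma continuous_tanh : Continuous Real.tanh :=
  continuous_iff_continuousAt.2 fun x => (hasDerivAt_tanh x).continuousAt

lemma tanh_strictMono : StrictMono Real.tanh :=
  strictMono_of_hasDerivAt_pos hasDerivAt_tanh
    (fun x => by have := Real.tanh_sq_lt_one x; linarith)

lemma tanh_concave : StrictConcaveOn ℝ (Ici (0:ℝ)) Real.tanh := by
  apply StrictAntiOn.strictConcaveOn_of_deriv (convex_Ici 0) continuous_tanh.continuousOn
  intro x hx y hy hxy
  rw [(hasDerivAt_tanh x).deriv, (hasDerivAt_tanh y).deriv]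
  rw [interior_Ici] at hx hy
  have h0 : 0 < Real.tanh x := by have := tanh_strictMono hx; simpa using this
  have h1 := tanh_strictMono hxy
  nlinarith

/-- three-point concavity for g(x) = tanh(θ x) - x -/
lemma g_three {θ x y z : ℝ} (hθ : 0 < θ) (hx : 0 ≤ x) (hxy : x < y) (hyz : y < z) :
    (Real.tanh (θ * z) - z - (Real.tanh (θ * y) - y)) * (y - x) <
      (Real.tanh (θ * y) - y - (Real.tanh (θ * x) - x)) * (z - y) := by
  have := tanh_concave.slope_anti_adjacent (x := θ * x) (y := θ * y) (z := θ * z)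
    (by simp; positivity) (by simp; nlinarith) (by nlinarith) (by nlinarith)
  rw [← mul_sub, ← mul_sub, div_lt_div_iff₀ (by nlinarith) (by nlinarith)] at this
  have h2 : (Real.tanh (θ * z) - Real.tanh (θ * y)) * (y - x) <
      (Real.tanh (θ * y) - Real.tanh (θ * x)) * (z - y) := by
    by_contra hc
    nlinarith
  nlinarith

lemma g_pos {θ m x : ℝ} (hθ : 0 < θ) (hm : Real.tanh (θ * m) = m) (hx : 0 < x) (hxm : x < m) :
    0 < Real.tanh (θ * x) - x := by
  have := g_three hθ le_rfl hx hxm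
  rw [hm] at this
  simp only [mul_zero, Real.tanh_zero] at this
  by_contra hc
  nlinarith

lemma g_neg {θ m x : ℝ} (hθ : 0 < θ) (hm0 : 0 < m) (hm : Real.tanh (θ * m) = m) (hxm : m < x) :
    Real.tanh (θ * x) - x < 0 := by
  have := g_three hθ le_rfl hm0 hxm
  rw [hm] at this
  simp only [mul_zero, Real.tanh_zero] at this
  by_contra hc
  nlinarith

lemma m_tendsto {θ₀ : ℝ} (hθ : 1 < θ₀) {m : ℝ → ℝ}
    (hm : ∀ θ : ℝ, 1 < θ → 0 < m θ ∧ Real.tanh (θ * m θ) = m θ) :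
    Tendsto m (𝓝 θ₀) (𝓝 (m θ₀)) := by
  obtain ⟨h0, h1⟩ := hm θ₀ hθ
  have hev : ∀ᶠ θ in 𝓝 θ₀, 1 < θ := lt_mem_nhds hθ
  have hc : ∀ x : ℝ, Continuous fun θ : ℝ => Real.tanh (θ * x) - x := fun x =>
    (continuous_tanh.comp (continuous_id.mul continuous_const)).sub continuous_const
  rw [tendsto_order]
  constructor
  · intro a ha
    wlog hap : 0 < a generalizing a
    · filter_upwards [hev] with θ h
      exact lt_of_le_of_lt (not_lt.1 hap) (hm θ h).1
    have hg := g_pos (by linarith) h1 hap ha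
    filter_upwards [hev, (hc a).continuousAt.eventually_const_lt hg] with θ h h'
    by_contra hcon
    rcases (not_lt.1 hcon).lt_or_eq with hl | he
    · have := g_neg (by linarith) (hm θ h).1 (hm θ h).2 hl
      linarith
    · have := (hm θ h).2
      rw [he] at this
      linarith
  · intro a ha
    have hg := g_neg (by linarith) h0 h1 ha
    filter_upwards [hev, (hc a).continuousAt.eventually_lt_const hg] with θ h h'
    by_contra hcon
    rcases (not_lt.1 hcon).lt_or_eq with hl | he
    · have := g_pos (by linarith) (hm θ h).2 (by linarith) hl
      linarith
    · have := (hm θ h).2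
      rw [← he] at this
      linarith

noncomputable def G (θ φ : ℝ) : ℝ := -(θ * φ ^ 2) / 2 + Real.log (Real.cosh (θ * φ))

lemma hasDerivAt_logcosh (x : ℝ) :
    HasDerivAt (fun x => Real.log (Real.cosh x)) (Real.tanh x) x := by
  have := (Real.hasDerivAt_cosh x).log (Real.cosh_pos x).ne'
  rwa [← Real.tanh_eq_sinh_div_cosh] at this

lemma hasDerivAt_G (θ φ : ℝ) : HasDerivAt (G θ) (θ * (Real.tanh (θ * φ) - φ)) φ := by
  have h1 : HasDerivAt (fun φ : ℝ => θ * φ) θ φ := by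
    simpa using (hasDerivAt_id φ).const_mul θ
  have h2 := (hasDerivAt_logcosh (θ * φ)).comp φ h1
  have h3 : HasDerivAt (fun φ : ℝ => -(θ * φ ^ 2) / 2) (-(θ * (2 * φ)) / 2) φ := by
    have := (((hasDerivAt_pow 2 φ).const_mul θ).neg).div_const 2
    simpa using this
  refine (h3.add h2).congr_deriv ?_
  ring

lemma continuous_G (θ : ℝ) : Continuous (G θ) :=
  continuous_iff_continuousAt.2 fun x => (hasDerivAt_G θ x).continuousAt

noncomputable def cc (θ m : ℝ) : ℝ := θ * (Real.tanh (θ * (m / 2)) - m / 2) / (4 * m)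

lemma G_bound {θ m : ℝ} (hθ : 0 < θ) (hm0 : 0 < m) (hm : Real.tanh (θ * m) = m) {φ : ℝ}
    (hφ : 0 < φ) : G θ φ ≤ G θ m - cc θ m * (φ - m) ^ 2 := by
  set δ := Real.tanh (θ * (m / 2)) - m / 2 with hδ
  have hδ0 : 0 < δ := g_pos hθ hm (by linarith) (by linarith)
  set κ := 2 * δ / m with hκ
  have hκ0 : 0 < κ := by positivity
  have hδκ : δ = κ * m / 2 := by rw [hκ]; field_simp
  have hcc : cc θ m = θ * κ / 8 := by rw [cc, ← hδ, hκ]; field_simp; ring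
  rw [hcc]
  -- lower / upper bounds of g
  have hlow : ∀ x, m / 2 ≤ x → x ≤ m → κ * (m - x) ≤ Real.tanh (θ * x) - x := by
    intro x h1 h2
    rcases h1.eq_or_lt with rfl | h1
    · rw [← hδ, hδκ]; linarith
    rcases h2.eq_or_lt with rfl | h2
    · rw [hm]; linarith
    have := g_three hθ (by linarith) h1 h2
    rw [hm, ← hδ, hδκ] at this
    by_contra hc
    nlinarith
  have hup : ∀ x, m ≤ x → Real.tanh (θ * x) - x ≤ κ * (m - x) := by
    intro x h2
    rcases h2.eq_or_lt with rfl | h2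
    · rw [hm]; linarith
    have := g_three (x := m / 2) hθ (by linarith) (by linarith) h2
    rw [hm, ← hδ, hδκ] at this
    by_contra hc
    nlinarith
  let H : ℝ → ℝ := fun x => G θ x + θ * κ / 2 * (x - m) ^ 2
  have hH : ∀ x, HasDerivAt H (θ * (Real.tanh (θ * x) - x) + θ * κ * (x - m)) x := by
    intro x
    have h1 : HasDerivAt (fun x : ℝ => (x - m) ^ 2) (2 * (x - m)) x := by
      simpa using ((hasDerivAt_id x).sub_const m).fun_pow 2
    refine ((hasDerivAt_G θ x).add (h1.const_mul (θ * κ / 2))).congr_deriv ?_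
    ring
  have hHc : Continuous H := continuous_iff_continuousAt.2 fun x => (hH x).continuousAt
  have hmono : MonotoneOn H (Icc (m / 2) m) := by
    apply monotoneOn_of_deriv_nonneg (convex_Icc _ _) hHc.continuousOn
      (fun x _ => (hH x).differentiableAt.differentiableWithinAt)
    intro x hx
    rw [interior_Icc] at hx
    rw [(hH x).deriv]
    have := hlow x hx.1.le hx.2.le
    nlinarith
  have hanti : AntitoneOn H (Ici m) := by
    apply antitoneOn_of_deriv_nonpos (convex_Ici _) hHc.continuousOn
      (fun x _ => (hH x).differentiableAt.differentiableWithinAt)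
    intro x hx
    rw [interior_Ici] at hx
    rw [(hH x).deriv]
    have := hup x (le_of_lt hx)
    nlinarith
  have hGm : MonotoneOn (G θ) (Icc 0 m) := by
    apply monotoneOn_of_deriv_nonneg (convex_Icc _ _) (continuous_G θ).continuousOn
      (fun x _ => (hasDerivAt_G θ x).differentiableAt.differentiableWithinAt)
    intro x hx
    rw [interior_Icc] at hx
    rw [(hasDerivAt_G θ x).deriv]
    have := g_pos hθ hm hx.1 hx.2
    positivity
  have hHm : H m = G θ m := by simp [H]
  have hpos : 0 < θ * κ := by positivity
  rcases le_total m φ with h | h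
  · have := hanti (mem_Ici.2 le_rfl) (mem_Ici.2 h) h
    rw [hHm] at this
    simp only [H] at this
    nlinarith [sq_nonneg (φ - m)]
  rcases le_total (m / 2) φ with h' | h'
  · have := hmono ⟨h', h⟩ ⟨by linarith, le_rfl⟩ h
    rw [hHm] at this
    simp only [H] at this
    nlinarith [sq_nonneg (φ - m)]
  · have h1 := hmono ⟨le_rfl, by linarith⟩ ⟨by linarith, le_rfl⟩ (by linarith : m / 2 ≤ m)
    have h2 := hGm ⟨hφ.le, h⟩ ⟨by linarith, by linarith⟩ h'
    rw [hHm] at h1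
    simp only [H] at h1
    have h3 : (φ - m) ^ 2 ≤ m ^ 2 := by nlinarith
    have h4 : θ * κ * (φ - m) ^ 2 ≤ θ * κ * m ^ 2 := by gcongr
    nlinarith

lemma taylor2 (a t : ℝ) : ∃ ξ, |ξ - a| ≤ |t| ∧
    Real.log (Real.cosh (a + t)) = Real.log (Real.cosh a) + t * Real.tanh a
      + t ^ 2 / 2 * (1 - Real.tanh ξ ^ 2) := by
  wlog ht : 0 ≤ t generalizing a t
  · obtain ⟨ξ, h1, h2⟩ := this (-a) (-t) (by linarith)
    refine ⟨-ξ, ?_, ?_⟩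
    · rw [abs_neg] at h1
      rw [← abs_neg]
      convert h1 using 2
      ring
    · rw [← neg_add, Real.cosh_neg, Real.cosh_neg, Real.tanh_neg] at h2
      rw [h2, Real.tanh_neg]
      ring
  rcases ht.eq_or_lt with rfl | ht
  · exact ⟨a, by simp, by simp⟩
  obtain ⟨c, hc, h⟩ := exists_ratio_hasDerivAt_eq_ratio_slope
    (fun s => Real.log (Real.cosh s) - (s - a) * Real.tanh a) (fun s => Real.tanh s - Real.tanh a)
    (show a < a + t by linarith)
    (by
      apply Continuous.continuousOn
      have : Continuous fun s => Real.log (Real.cosh s) :=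
        continuous_iff_continuousAt.2 fun x => (hasDerivAt_logcosh x).continuousAt
      fun_prop)
    (fun x _ => by
      have h1 : HasDerivAt (fun s : ℝ => (s - a) * Real.tanh a) (Real.tanh a) x := by
        simpa using ((hasDerivAt_id x).sub_const a).mul_const (Real.tanh a)
      exact (hasDerivAt_logcosh x).sub h1)
    (fun s => (s - a) ^ 2) (fun s => 2 * (s - a))
    (by fun_prop)
    (fun x _ => by simpa using ((hasDerivAt_id x).sub_const a).fun_pow 2)
  obtain ⟨ξ, hξ, h'⟩ := exists_hasDerivAt_eq_slope Real.tanh (fun x => 1 - Real.tanh x ^ 2) hc.1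
    continuous_tanh.continuousOn (fun x _ => hasDerivAt_tanh x)
  refine ⟨ξ, ?_, ?_⟩
  · rw [abs_of_pos (by linarith [hξ.1]), abs_of_pos ht]
    linarith [hξ.2, hc.2]
  · have hca : 0 < c - a := by linarith [hc.1]
    rw [eq_div_iff hca.ne'] at h'
    rw [← h'] at h
    simp only [add_sub_cancel_left, sub_self] at h
    have : (c - a) * (t ^ 2 * (1 - Real.tanh ξ ^ 2)) = (c - a) * (2 * (Real.log (Real.cosh (a + t)) -
      Real.log (Real.cosh a) - t * Real.tanh a)) := by linarith
    have := mul_left_cancel₀ hca.ne' this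
    linarith

lemma G_taylor {θ m : ℝ} (hm : Real.tanh (θ * m) = m) (s : ℝ) : ∃ ξ, |ξ - θ * m| ≤ |θ * s| ∧
    G θ (m + s) - G θ m = s ^ 2 / 2 * (-θ + θ ^ 2 * (1 - Real.tanh ξ ^ 2)) := by
  obtain ⟨ξ, h1, h2⟩ := taylor2 (θ * m) (θ * s)
  refine ⟨ξ, h1, ?_⟩
  rw [G, G, mul_add, h2, hm]
  ring

end CW

namespace CW
open Real Topology Set

lemma lam_pos {θ m : ℝ} (hθ : 0 < θ) (hm0 : 0 < m) (hm : Real.tanh (θ * m) = m) :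
    0 < θ - (1 - m ^ 2) * θ ^ 2 := by
  have hu : 0 < θ * m := by positivity
  have h1 : 2 * (θ * m) < Real.sinh (2 * (θ * m)) := Real.self_lt_sinh_iff.2 (by positivity)
  rw [Real.sinh_two_mul] at h1
  have hc := Real.cosh_pos (θ * m)
  have hs : Real.sinh (θ * m) = m * Real.cosh (θ * m) := by
    rw [Real.tanh_eq_sinh_div_cosh, div_eq_iff hc.ne'] at hm
    exact hm
  have hcs := Real.cosh_sq (θ * m)
  rw [hs] at h1 hcs
  have h2 : θ < Real.cosh (θ * m) ^ 2 := by
    by_contra hcon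
    nlinarith
  have h3 : (1 - m ^ 2) * Real.cosh (θ * m) ^ 2 = 1 := by linarith
  have h4 : 0 < 1 - m ^ 2 := by
    by_contra hcon
    nlinarith [sq_nonneg (Real.cosh (θ * m))]
  have h5 : (1 - m ^ 2) * θ < 1 := by nlinarith
  nlinarith

lemma dens_eq (n : ℕ) (θ φ : ℝ) : phiDensity n θ φ = Real.exp (n * G θ φ) := by
  rw [phiDensity, G]; congr 1; ring

lemma dens_cont (n : ℕ) (θ : ℝ) : Continuous (phiDensity n θ) := by
  have : phiDensity n θ = fun φ => Real.exp (n * G θ φ) := funext (dens_eq n θ)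
  rw [this]
  have := continuous_G θ
  fun_prop

lemma logcosh_le (u : ℝ) : Real.log (Real.cosh u) ≤ |u| := by
  rw [← Real.log_exp |u|]
  apply Real.log_le_log (Real.cosh_pos u)
  rw [Real.cosh_eq]
  have h1 : Real.exp u ≤ Real.exp |u| := Real.exp_le_exp.2 (le_abs_self u)
  have h2 : Real.exp (-u) ≤ Real.exp |u| := Real.exp_le_exp.2 (neg_le_abs u)
  linarith

lemma dens_integrable {n : ℕ} (hn : 0 < n) {θ : ℝ} (hθ : 0 < θ) : Integrable (phiDensity n θ) := by
  have hn' : (0:ℝ) < n := by exact_mod_cast hn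
  have hi := (integrable_exp_neg_mul_sq (b := n * θ / 4) (by positivity)).const_mul
    (Real.exp (n * θ))
  refine hi.mono' (dens_cont n θ).aestronglyMeasurable (ae_of_all _ fun φ => ?_)
  rw [dens_eq, Real.norm_eq_abs, abs_of_pos (Real.exp_pos _), ← Real.exp_add]
  apply Real.exp_le_exp.2
  have h1 := logcosh_le (θ * φ)
  rw [abs_mul, abs_of_pos hθ] at h1
  have h2 : |φ| ≤ φ ^ 2 / 4 + 1 := by
    have := sq_abs φ
    nlinarith [sq_nonneg (|φ| - 2)]
  have h3 : G θ φ ≤ θ + -(θ / 4) * φ ^ 2 := by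
    rw [G]
    nlinarith
  calc (n:ℝ) * G θ φ ≤ n * (θ + -(θ / 4) * φ ^ 2) := by gcongr
    _ = _ := by ring

lemma unnorm_univ_ne_top {n : ℕ} (hn : 0 < n) {θ : ℝ} (hθ : 0 < θ) :
    phiUnnorm n θ univ ≠ ⊤ := by
  rw [phiUnnorm, withDensity_apply _ MeasurableSet.univ, Measure.restrict_univ]
  exact (dens_integrable hn hθ).lintegral_lt_top.ne

lemma unnorm_Ioi_ne_zero {n : ℕ} {θ : ℝ} : phiUnnorm n θ (Ioi 0) ≠ 0 := by
  rw [phiUnnorm]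
  intro h
  rw [withDensity_apply_eq_zero (dens_cont n θ).measurable.ennreal_ofReal] at h
  have : {x | ENNReal.ofReal (phiDensity n θ x) ≠ 0} ∩ Ioi 0 = Ioi 0 := by
    apply inter_eq_right.2
    intro x _
    simp only [mem_ofPred_eq, ne_eq, ENNReal.ofReal_eq_zero, not_le]
    rw [dens_eq]; positivity
  rw [this] at h
  simp at h

lemma condPos_eq {n : ℕ} (hn : 0 < n) {θ : ℝ} (hθ : 0 < θ) :
    condPos (phiMeasure n θ) =
      (phiUnnorm n θ (Ioi 0))⁻¹ • (phiUnnorm n θ).restrict (Ioi 0) := by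
  have h1 := unnorm_univ_ne_top hn hθ
  have h2 : phiUnnorm n θ univ ≠ 0 := fun h =>
    unnorm_Ioi_ne_zero (n := n) (θ := θ) (measure_mono_null (subset_univ _) h)
  rw [condPos, phiMeasure, Measure.smul_apply, Measure.restrict_smul, smul_smul, smul_eq_mul]
  congr 1
  rw [ENNReal.mul_inv (Or.inl (ENNReal.inv_ne_zero.2 h1)) (Or.inl (ENNReal.inv_ne_top.2 h2)),
    inv_inv, mul_right_comm, ENNReal.mul_inv_cancel h2 h1, one_mul]

lemma setInt (n : ℕ) (θ : ℝ) (F : ℝ → ℝ) :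
    ∫ φ in Ioi 0, F φ ∂(phiUnnorm n θ) = ∫ φ in Ioi 0, F φ * phiDensity n θ φ := by
  rw [phiUnnorm, setIntegral_withDensity_eq_setIntegral_toReal_smul
    (dens_cont n θ).measurable.ennreal_ofReal (ae_of_all _ fun _ => ENNReal.ofReal_lt_top) _
    measurableSet_Ioi]
  congr 1
  funext φ
  rw [ENNReal.toReal_ofReal (by rw [dens_eq]; positivity), smul_eq_mul, mul_comm]

lemma int_cond {n : ℕ} (hn : 0 < n) {θ : ℝ} (hθ : 0 < θ) (F : ℝ → ℝ) :
    ∫ φ, F φ ∂(condPos (phiMeasure n θ)) =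
      (∫ φ in Ioi 0, F φ * phiDensity n θ φ) / (∫ φ in Ioi 0, phiDensity n θ φ) := by
  rw [condPos_eq hn hθ, integral_smul_measure, setInt]
  have h1 := setInt n θ (fun _ => 1)
  simp only [one_mul, integral_const, smul_eq_mul, mul_one] at h1
  rw [← h1, smul_eq_mul, ENNReal.toReal_inv, measureReal_restrict_apply MeasurableSet.univ,
    univ_inter, Measure.real, div_eq_inv_mul]

noncomputable def w (n : ℕ) (θ m x : ℝ) : ℝ :=
  if 0 < m + x / Real.sqrt n then
    Real.exp (n * (G θ (m + x / Real.sqrt n) - G θ m)) else 0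

lemma subst {n : ℕ} (hn : 0 < n) (θ m : ℝ) (F : ℝ → ℝ) :
    ∫ φ in Ioi 0, F (Real.sqrt n * (φ - m)) * phiDensity n θ φ =
      (Real.exp (n * G θ m) / Real.sqrt n) * ∫ x, F x * w n θ m x := by
  have hn' : (0:ℝ) < n := by exact_mod_cast hn
  have hs : 0 < Real.sqrt n := Real.sqrt_pos.2 hn'
  rw [← integral_indicator measurableSet_Ioi]
  set g : ℝ → ℝ := (Ioi (0:ℝ)).indicator
    (fun φ => F (Real.sqrt n * (φ - m)) * phiDensity n θ φ) with hg
  have h1 : ∫ φ, g φ = ∫ y, g (m + y) := (integral_add_left_eq_self g m).symm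
  have h2 := Measure.integral_comp_div (fun y => g (m + y)) (Real.sqrt n)
  rw [abs_of_pos hs, smul_eq_mul] at h2
  rw [h1]
  have h3 : ∀ x, g (m + x / Real.sqrt n) = Real.exp (n * G θ m) * (F x * w n θ m x) := by
    intro x
    simp only [hg, w, indicator, mem_Ioi]
    split_ifs with h
    · rw [dens_eq, mul_left_comm, ← Real.exp_add]
      congr 2
      · field_simp; ring
      · ring
    · simp
  simp only [h3] at h2
  rw [integral_const_mul] at h2
  field_simp
  linarith

lemma int_formula {n : ℕ} (hn : 0 < n) {θ : ℝ} (hθ : 0 < θ) (m : ℝ) (F : ℝ → ℝ) :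
    ∫ φ, F (Real.sqrt n * (φ - m)) ∂(condPos (phiMeasure n θ)) =
      (∫ x, F x * w n θ m x) / (∫ x, w n θ m x) := by
  have hn' : (0:ℝ) < n := by exact_mod_cast hn
  have hs : 0 < Real.sqrt n := Real.sqrt_pos.2 hn'
  rw [int_cond hn hθ (fun φ => F (Real.sqrt n * (φ - m))), subst hn]
  have h1 := subst hn θ m (fun _ => 1)
  simp only [one_mul] at h1
  rw [h1, mul_div_mul_left]
  positivity

lemma w_meas (n : ℕ) (θ m : ℝ) : Measurable (w n θ m) := by
  unfold w
  have := (continuous_G θ).measurable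
  refine Measurable.ite (measurableSet_lt measurable_const (by fun_prop)) ?_ measurable_const
  apply Real.measurable_exp.comp
  apply Measurable.const_mul
  apply Measurable.sub_const
  exact this.comp (by fun_prop)

lemma w_nonneg (n : ℕ) (θ m x : ℝ) : 0 ≤ w n θ m x := by
  unfold w; split_ifs
  · positivity
  · exact le_rfl

lemma w_le {n : ℕ} (hn : 0 < n) {θ m c : ℝ} (hθ : 0 < θ) (hm0 : 0 < m)
    (hm : Real.tanh (θ * m) = m) (hc : c ≤ cc θ m) (x : ℝ) :
    w n θ m x ≤ Real.exp (-c * x ^ 2) := by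
  have hn' : (0:ℝ) < n := by exact_mod_cast hn
  have hs : 0 < Real.sqrt n := Real.sqrt_pos.2 hn'
  unfold w; split_ifs with h
  · apply Real.exp_le_exp.2
    have h1 := G_bound hθ hm0 hm h
    rw [add_sub_cancel_left, div_pow, Real.sq_sqrt hn'.le] at h1
    calc (n:ℝ) * (G θ (m + x / Real.sqrt n) - G θ m) ≤ n * (-(cc θ m * (x ^ 2 / n))) := by
          gcongr; linarith
      _ = - cc θ m * x ^ 2 := by field_simp
      _ ≤ _ := by nlinarith [sq_nonneg x]
  · positivity

lemma w_tendsto {θ₀ m₀ : ℝ} {θ μ : ℕ → ℝ} (hm0 : 0 < m₀) (hm : Real.tanh (θ₀ * m₀) = m₀)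
    (hθt : Tendsto θ atTop (𝓝 θ₀)) (hμt : Tendsto μ atTop (𝓝 m₀))
    (hev : ∀ᶠ n in atTop, Real.tanh (θ n * μ n) = μ n) (x : ℝ) :
    Tendsto (fun n => w n (θ n) (μ n) x) atTop
      (𝓝 (Real.exp (-(θ₀ - (1 - m₀ ^ 2) * θ₀ ^ 2) * x ^ 2 / 2))) := by
  have hst : Tendsto (fun n : ℕ => x / Real.sqrt n) atTop (𝓝 0) :=
    tendsto_const_nhds.div_atTop (Real.tendsto_sqrt_atTop.comp tendsto_natCast_atTop_atTop)
  have hpos : ∀ᶠ n : ℕ in atTop, 0 < μ n + x / Real.sqrt n := by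
    have : Tendsto (fun n : ℕ => μ n + x / Real.sqrt n) atTop (𝓝 (m₀ + 0)) := hμt.add hst
    exact this.eventually_const_lt (by simpa using hm0)
  have hex : ∀ n : ℕ, ∃ ξ, Real.tanh (θ n * μ n) = μ n → |ξ - θ n * μ n| ≤ |θ n * (x / Real.sqrt n)| ∧
      G (θ n) (μ n + x / Real.sqrt n) - G (θ n) (μ n) =
        (x / Real.sqrt n) ^ 2 / 2 * (-θ n + θ n ^ 2 * (1 - Real.tanh ξ ^ 2)) := by
    intro n
    by_cases h : Real.tanh (θ n * μ n) = μ n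
    · obtain ⟨ξ, h1⟩ := G_taylor h (x / Real.sqrt n)
      exact ⟨ξ, fun _ => h1⟩
    · exact ⟨0, fun h' => absurd h' h⟩
  choose ξ hξ using hex
  have h0 : Tendsto (fun n => ξ n - θ n * μ n) atTop (𝓝 0) := by
    have : Tendsto (fun n : ℕ => |θ n * (x / Real.sqrt n)|) atTop (𝓝 0) := by
      simpa using (hθt.mul hst).abs
    refine squeeze_zero_norm' ?_ this
    filter_upwards [hev] with n hn
    exact (hξ n hn).1
  have hξt : Tendsto ξ atTop (𝓝 (θ₀ * m₀)) := by
    have := h0.add (hθt.mul hμt)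
    simpa using this
  have ht : Tendsto (fun n => Real.tanh (ξ n)) atTop (𝓝 m₀) := by
    have := (continuous_tanh.tendsto (θ₀ * m₀)).comp hξt
    rwa [hm] at this
  have hfin : Tendsto (fun n => Real.exp (x ^ 2 / 2 * (-θ n + θ n ^ 2 * (1 - Real.tanh (ξ n) ^ 2))))
      atTop (𝓝 (Real.exp (x ^ 2 / 2 * (-θ₀ + θ₀ ^ 2 * (1 - m₀ ^ 2))))) := by
    apply (Real.continuous_exp.tendsto _).comp
    exact (hθt.neg.add ((hθt.pow 2).mul ((ht.pow 2).const_sub 1))).const_mul _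
  have he : Real.exp (-(θ₀ - (1 - m₀ ^ 2) * θ₀ ^ 2) * x ^ 2 / 2) =
      Real.exp (x ^ 2 / 2 * (-θ₀ + θ₀ ^ 2 * (1 - m₀ ^ 2))) := by congr 1; ring
  rw [he]
  refine hfin.congr' ?_
  filter_upwards [hev, hpos, eventually_gt_atTop 0] with n h1 h2 h3
  have hn' : (0:ℝ) < n := by exact_mod_cast h3
  rw [w, if_pos h2, (hξ n h1).2, div_pow, Real.sq_sqrt hn'.le]
  congr 1
  field_simp

lemma int_tendsto {θ₀ m₀ : ℝ} {θ μ : ℕ → ℝ} (hθ0 : 0 < θ₀) (hm0 : 0 < m₀)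
    (hm : Real.tanh (θ₀ * m₀) = m₀)
    (hθt : Tendsto θ atTop (𝓝 θ₀)) (hμt : Tendsto μ atTop (𝓝 m₀))
    (hev : ∀ᶠ n in atTop, 0 < θ n ∧ 0 < μ n ∧ Real.tanh (θ n * μ n) = μ n)
    {F : ℝ → ℝ} (hFc : Continuous F)
    (hF : ∀ c : ℝ, 0 < c → Integrable fun x => F x * Real.exp (-c * x ^ 2)) :
    Tendsto (fun n => ∫ x, F x * w n (θ n) (μ n) x) atTop
      (𝓝 (∫ x, F x * Real.exp (-(θ₀ - (1 - m₀ ^ 2) * θ₀ ^ 2) * x ^ 2 / 2))) := by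
  have hcp : 0 < cc θ₀ m₀ := by
    have := g_pos hθ0 hm (x := m₀ / 2) (by linarith) (by linarith)
    unfold cc; positivity
  have hct : Tendsto (fun n => cc (θ n) (μ n)) atTop (𝓝 (cc θ₀ m₀)) := by
    unfold cc
    refine Tendsto.div (hθt.mul (Tendsto.sub ?_ (hμt.div_const 2))) (hμt.const_mul 4) (by positivity)
    exact (continuous_tanh.tendsto _).comp (hθt.mul (hμt.div_const 2))
  have hce := hct.eventually_const_le (half_lt_self hcp)
  refine tendsto_integral_filter_of_dominated_convergence
    (fun x => ‖F x * Real.exp (-(cc θ₀ m₀ / 2) * x ^ 2)‖)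
    (Eventually.of_forall fun n => (hFc.measurable.mul (w_meas _ _ _)).aestronglyMeasurable)
    ?_ (hF _ (by positivity)).norm ?_
  · filter_upwards [hev, hce, eventually_gt_atTop 0] with n h1 h2 h3
    refine ae_of_all _ fun x => ?_
    rw [norm_mul, norm_mul]
    refine mul_le_mul_of_nonneg_left ?_ (norm_nonneg _)
    rw [Real.norm_of_nonneg (w_nonneg _ _ _ _), Real.norm_of_nonneg (Real.exp_pos _).le]
    exact w_le h3 h1.1 h1.2.1 h1.2.2 h2 x
  · refine ae_of_all _ fun x => ?_
    exact (w_tendsto hm0 hm hθt hμt (hev.mono fun n h => h.2.2) x).const_mul (F x)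

lemma gauss {l : ℝ} (hl : 0 < l) (F : ℝ → ℝ) :
    ∫ x, F x ∂gaussianReal 0 (Real.toNNReal (1 / l)) =
      (∫ x, F x * Real.exp (-l * x ^ 2 / 2)) / ∫ x, Real.exp (-l * x ^ 2 / 2) := by
  have hv : Real.toNNReal (1 / l) ≠ 0 := by
    have : 0 < 1 / l := by positivity
    simpa using this
  have hp : ∀ x, gaussianPDFReal 0 (Real.toNNReal (1 / l)) x =
      (√(2 * π * (1 / l)))⁻¹ * Real.exp (-l * x ^ 2 / 2) := by
    intro x
    rw [gaussianPDFReal_def]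
    simp only [Real.coe_toNNReal _ (show 0 ≤ 1 / l by positivity), sub_zero]
    congr 2
    field_simp
  have h1 := integral_gaussianPDFReal_eq_one 0 hv
  rw [integral_gaussianReal_eq_integral_smul hv]
  simp only [hp, smul_eq_mul] at h1 ⊢
  rw [integral_const_mul] at h1
  have h2 : (√(2 * π * (1 / l)))⁻¹ ≠ 0 := by positivity
  simp only [mul_assoc]
  rw [integral_const_mul]
  have h3 : ∫ x, Real.exp (-l * x ^ 2 / 2) ≠ 0 := right_ne_zero_of_mul_eq_one h1
  rw [eq_div_iff h3]
  simp only [mul_comm (F _)]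
  rw [mul_right_comm, ← mul_assoc 2, h1, one_mul]

lemma main {θ₀ h : ℝ} (hθ : 1 < θ₀) {m : ℝ → ℝ}
    (hm : ∀ θ : ℝ, 1 < θ → 0 < m θ ∧ Real.tanh (θ * m θ) = m θ)
    {F : ℝ → ℝ} (hFc : Continuous F)
    (hF : ∀ c : ℝ, 0 < c → Integrable fun x => F x * Real.exp (-c * x ^ 2)) :
    Tendsto (fun n : ℕ =>
          ∫ φ, F (Real.sqrt (n : ℝ) * (φ - m (θ₀ + h / Real.sqrt (n : ℝ)))) ∂
            condPos (phiMeasure n (θ₀ + h / Real.sqrt (n : ℝ))))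
        atTop
        (nhds (∫ x, F x ∂ gaussianReal 0
          (Real.toNNReal (1 / (θ₀ - (1 - m θ₀ ^ 2) * θ₀ ^ 2))))) := by
  obtain ⟨hm0, hm1⟩ := hm θ₀ hθ
  have hθ0 : 0 < θ₀ := by linarith
  have hl := lam_pos hθ0 hm0 hm1
  have hθt : Tendsto (fun n : ℕ => θ₀ + h / Real.sqrt n) atTop (𝓝 θ₀) := by
    have : Tendsto (fun n : ℕ => h / Real.sqrt n) atTop (𝓝 0) :=
      tendsto_const_nhds.div_atTop (Real.tendsto_sqrt_atTop.comp tendsto_natCast_atTop_atTop)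
    simpa using this.const_add θ₀
  have hμt := (m_tendsto hθ hm).comp hθt
  have hgt := hθt.eventually_const_lt hθ
  have hev : ∀ᶠ n : ℕ in atTop, 0 < θ₀ + h / Real.sqrt n ∧ 0 < m (θ₀ + h / Real.sqrt n) ∧
      Real.tanh ((θ₀ + h / Real.sqrt n) * m (θ₀ + h / Real.sqrt n)) = m (θ₀ + h / Real.sqrt n) := by
    filter_upwards [hgt] with n hn
    exact ⟨by linarith, hm _ hn⟩
  have hnum := int_tendsto hθ0 hm0 hm1 hθt hμt hev hFc hF
  have hden := int_tendsto hθ0 hm0 hm1 hθt hμt hev (F := fun _ => 1) continuous_const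
    (fun c hc => by simpa using integrable_exp_neg_mul_sq hc)
  simp only [one_mul] at hden
  have hne : ∫ x, Real.exp (-(θ₀ - (1 - m θ₀ ^ 2) * θ₀ ^ 2) * x ^ 2 / 2) ≠ 0 := by
    have h1 := gauss hl (fun _ => 1)
    intro h0
    rw [h0] at h1
    simp at h1
  rw [gauss hl]
  refine (hnum.div hden hne).congr' ?_
  filter_upwards [hgt, eventually_gt_atTop 0] with n h1 h2
  exact (int_formula h2 (by linarith) _ F).symm

end CW

theorem stmt10 (θ₀ h : ℝ) (hθ : 1 < θ₀) (m : ℝ → ℝ)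
    (hm : ∀ θ : ℝ, 1 < θ → 0 < m θ ∧ Real.tanh (θ * m θ) = m θ) :
    (∀ f : BoundedContinuousFunction ℝ ℝ,
      Tendsto (fun n : ℕ =>
          ∫ φ, f (Real.sqrt (n : ℝ) * (φ - m (θ₀ + h / Real.sqrt (n : ℝ)))) ∂
            condPos (phiMeasure n (θ₀ + h / Real.sqrt (n : ℝ))))
        atTop
        (nhds (∫ x, f x ∂ gaussianReal 0
          (Real.toNNReal (1 / (θ₀ - (1 - m θ₀ ^ 2) * θ₀ ^ 2)))))) ∧
    (∀ k : ℕ,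
      Tendsto (fun n : ℕ =>
          ∫ φ, (Real.sqrt (n : ℝ) * (φ - m (θ₀ + h / Real.sqrt (n : ℝ)))) ^ k ∂
            condPos (phiMeasure n (θ₀ + h / Real.sqrt (n : ℝ))))
        atTop
        (nhds (∫ x, x ^ k ∂ gaussianReal 0
          (Real.toNNReal (1 / (θ₀ - (1 - m θ₀ ^ 2) * θ₀ ^ 2)))))) := by
  constructor
  · intro f
    refine CW.main hθ hm f.continuous fun c hc => ?_
    exact (integrable_exp_neg_mul_sq hc).bdd_mul f.continuous.aestronglyMeasurable
      (ae_of_all _ f.norm_coe_le_norm)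
  · intro k
    refine CW.main hθ hm (F := fun x => x ^ k) (continuous_pow k) fun c hc => ?_
    have := integrable_rpow_mul_exp_neg_mul_sq hc (s := k)
      (lt_of_lt_of_le (by norm_num) (Nat.cast_nonneg k))
    simpa only [Real.rpow_natCast] using this
end

section
/- Fix θ₀ > 1 and h ∈ ℝ, and set θ_n := θ₀ + h/√n. Then lim_{n→∞} [ Z_n(θ_n,CW) − Z_n(θ₀,CW) − (1/2)·√n·h·m(θ₀)² ] = R(θ₀)·h²/2, where R(θ₀) := m(θ₀)²·σ²(θ₀). -/
open Filter

noncomputable def spin (b : Bool) : ℝ := if b then 1 else -1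

noncomputable def mag (n : ℕ) (x : Fin n → Bool) : ℝ := (∑ i, spin (x i)) / n

/-- Log normalizing constant of the Curie–Weiss model. -/
noncomputable def Zcw (n : ℕ) (θ : ℝ) : ℝ :=
  Real.log (∑ x : Fin n → Bool, Real.exp ((n : ℝ) * θ * mag n x ^ 2 / 2))

open MeasureTheory Topology

noncomputable def gg (T s : ℝ) : ℝ := Real.log (Real.cosh s) - s ^ 2 / (2 * T)

lemma hasDerivAt_tanh' (s : ℝ) : HasDerivAt Real.tanh (1 - Real.tanh s ^ 2) s := by
  have h0 : Real.cosh s ≠ 0 := (Real.cosh_pos s).ne'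
  have h := (Real.hasDerivAt_sinh s).div (Real.hasDerivAt_cosh s) h0
  have e : Real.tanh = Real.sinh / Real.cosh := by
    funext x; simp [Real.tanh_eq_sinh_div_cosh]
  rw [e]
  refine h.congr_deriv ?_
  simp only [Pi.div_apply]
  field_simp

lemma key_ineq (s : ℝ) (hs : 0 < s) : s * (1 - Real.tanh s ^ 2) < Real.tanh s := by
  have hc := Real.cosh_pos s
  have h1 : s < Real.sinh s := Real.self_lt_sinh_iff.2 hs
  have h2 : 1 ≤ Real.cosh s := Real.one_le_cosh s
  have h3 := Real.cosh_sq s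
  rw [Real.tanh_eq_sinh_div_cosh]
  have : 1 - (Real.sinh s / Real.cosh s) ^ 2 = 1 / Real.cosh s ^ 2 := by
    field_simp; linarith
  rw [this, mul_one_div, div_lt_div_iff₀ (by positivity) hc]
  have : s < Real.sinh s * Real.cosh s := by nlinarith
  nlinarith

lemma tanh_div_anti : StrictAntiOn (fun s => Real.tanh s / s) (Set.Ioi 0) := by
  have hd : ∀ s ∈ Set.Ioi (0:ℝ), HasDerivAt (fun s => Real.tanh s / s)
      (((1 - Real.tanh s ^ 2) * s - Real.tanh s * 1) / s ^ 2) s := by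
    intro s hs
    exact (hasDerivAt_tanh' s).div (hasDerivAt_id s) (ne_of_gt hs)
  apply strictAntiOn_of_deriv_neg (convex_Ioi 0)
  · intro s hs; exact (hd s hs).continuousAt.continuousWithinAt
  · intro s hs
    rw [interior_Ioi] at hs
    rw [(hd s hs).deriv]
    have := key_ineq s hs
    have hs' : 0 < s := hs
    apply div_neg_of_neg_of_pos _ (by positivity)
    linarith

lemma hasDerivAt_gg (T s : ℝ) : HasDerivAt (gg T) (Real.tanh s - s / T) s := by
  have h0 : Real.cosh s ≠ 0 := (Real.cosh_pos s).ne'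
  have h := ((Real.hasDerivAt_cosh s).log h0).sub (((hasDerivAt_id s).pow 2).div_const (2 * T))
  refine HasDerivAt.congr_deriv (f := gg T) h ?_
  rw [Real.tanh_eq_sinh_div_cosh]
  simp
  ring

lemma gg_continuous (T : ℝ) : Continuous (gg T) :=
  continuous_iff_continuousAt.2 fun s => (hasDerivAt_gg T s).continuousAt

lemma gg_mono (T s0 : ℝ) (hs0 : 0 < s0) (h : Real.tanh s0 = s0 / T) :
    StrictMonoOn (gg T) (Set.Icc 0 s0) := by
  apply strictMonoOn_of_deriv_pos (convex_Icc 0 s0) (gg_continuous T).continuousOn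
  intro s hs
  rw [interior_Icc] at hs
  rw [(hasDerivAt_gg T s).deriv]
  have := tanh_div_anti hs.1 hs0 hs.2
  simp only [h] at this
  have e : s0 / T / s0 = 1 / T := by field_simp
  rw [e, lt_div_iff₀ hs.1] at this
  have : 1 / T * s = s / T := by ring
  linarith

lemma gg_right (T s0 : ℝ) (hs0 : 0 < s0) (h : Real.tanh s0 = s0 / T) (s : ℝ) (hs : s0 ≤ s) :
    gg T s - gg T s0 ≤ - ((1 / T - (1 - Real.tanh s0 ^ 2)) / 2) * (s - s0) ^ 2 := by
  set c := 1 / T - (1 - Real.tanh s0 ^ 2) with hc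
  have hd1 : ∀ t, HasDerivAt (fun t => Real.tanh t - (1 - Real.tanh s0 ^ 2) * t)
      ((1 - Real.tanh t ^ 2) - (1 - Real.tanh s0 ^ 2) * 1) t := fun t =>
    (hasDerivAt_tanh' t).sub ((hasDerivAt_id t).const_mul _)
  have htm : Monotone Real.tanh := by
    apply monotone_of_deriv_nonneg (fun s => (hasDerivAt_tanh' s).differentiableAt)
    intro s
    rw [(hasDerivAt_tanh' s).deriv]
    have := Real.tanh_sq_lt_one s
    linarith
  have ht0 : 0 ≤ Real.tanh s0 := by simpa using htm hs0.le
  have a1 : AntitoneOn (fun t => Real.tanh t - (1 - Real.tanh s0 ^ 2) * t) (Set.Ici s0) := by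
    apply antitoneOn_of_deriv_nonpos (convex_Ici s0)
    · intro t _; exact (hd1 t).continuousAt.continuousWithinAt
    · intro t _; exact (hd1 t).differentiableAt.differentiableWithinAt
    · intro t ht
      rw [interior_Ici] at ht
      rw [(hd1 t).deriv]
      have := htm (le_of_lt ht)
      nlinarith
  have hd2 : ∀ t, HasDerivAt (fun t => gg T t + c / 2 * (t - s0) ^ 2)
      ((Real.tanh t - t / T) + c / 2 * (2 * (t - s0))) t := fun t => by
    have := (hasDerivAt_gg T t).add ((((hasDerivAt_id t).sub_const s0).pow 2).const_mul (c / 2))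
    refine HasDerivAt.congr_deriv (f := fun t => gg T t + c / 2 * (t - s0) ^ 2) this ?_
    simp
  have a2 : AntitoneOn (fun t => gg T t + c / 2 * (t - s0) ^ 2) (Set.Ici s0) := by
    apply antitoneOn_of_deriv_nonpos (convex_Ici s0)
    · intro t _; exact (hd2 t).continuousAt.continuousWithinAt
    · intro t _; exact (hd2 t).differentiableAt.differentiableWithinAt
    · intro t ht
      rw [interior_Ici] at ht
      rw [(hd2 t).deriv]
      have := a1 (Set.self_mem_Ici) (le_of_lt ht : s0 ≤ t) (le_of_lt ht)
      simp only at this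
      rw [hc]
      have e : t / T = 1 / T * t := by ring
      have e' : Real.tanh s0 = 1 / T * s0 := by rw [h]; ring
      rw [e]
      nlinarith
  have := a2 (Set.self_mem_Ici) (hs : s ∈ Set.Ici s0) hs
  simp only [sub_self] at this
  nlinarith

lemma gg_quad (T s0 : ℝ) (h : Real.tanh s0 = s0 / T) :
    Tendsto (fun s => (gg T s - gg T s0) / (s - s0) ^ 2) (𝓝[≠] s0)
      (𝓝 (- ((1 / T - (1 - Real.tanh s0 ^ 2)) / 2))) := by
  apply HasDerivAt.lhopital_zero_nhdsNE (f' := fun s => Real.tanh s - s / T)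
    (g' := fun s => 2 * (s - s0))
  · exact Eventually.of_forall fun s => (hasDerivAt_gg T s).sub_const _
  · refine Eventually.of_forall fun s => ?_
    have := ((hasDerivAt_id s).sub_const s0).pow 2
    refine HasDerivAt.congr_deriv (f := fun s => (s - s0) ^ 2) this ?_
    simp
  · filter_upwards [self_mem_nhdsWithin] with s hs
    have : s - s0 ≠ 0 := sub_ne_zero.2 hs
    positivity
  · have : Tendsto (fun s => gg T s - gg T s0) (𝓝 s0) (𝓝 (gg T s0 - gg T s0)) :=
      ((gg_continuous T).tendsto s0).sub_const _
    rw [sub_self] at this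
    exact this.mono_left nhdsWithin_le_nhds
  · have : Tendsto (fun s => (s - s0) ^ 2) (𝓝 s0) (𝓝 ((s0 - s0) ^ 2)) :=
      (by fun_prop : Continuous fun s : ℝ => (s - s0) ^ 2).tendsto s0
    simp only [sub_self, ne_eq, OfNat.ofNat_ne_zero, not_false_eq_true, zero_pow] at this
    exact this.mono_left nhdsWithin_le_nhds
  · have hd : HasDerivAt (fun s => Real.tanh s - s / T) ((1 - Real.tanh s0 ^ 2) - 1 / T) s0 :=
      (hasDerivAt_tanh' s0).sub ((hasDerivAt_id s0).div_const T)
    have := (hasDerivAt_iff_tendsto_slope.1 hd).div_const 2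
    convert this using 2
    · rw [slope_def_field, h, sub_self, sub_zero, div_div, mul_comm]
    · ring

lemma gg_bound (T s0 : ℝ) (hs0 : 0 < s0) (hT : 0 < T) (h : Real.tanh s0 = s0 / T)
    (hc : 0 < 1 / T - (1 - Real.tanh s0 ^ 2)) :
    ∃ κ > 0, ∀ s > 0, gg T s - gg T s0 ≤ -κ * (s - s0) ^ 2 := by
  have hr := gg_right T s0 hs0 h
  have hq := gg_quad T s0 h
  set c := 1 / T - (1 - Real.tanh s0 ^ 2) with hcd
  have h1 := hq.eventually (gt_mem_nhds (show -(c/2) < -(c/4) by linarith))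
  rw [eventually_nhdsWithin_iff, Metric.eventually_nhds_iff] at h1
  obtain ⟨δ', hδ', hb⟩ := h1
  set δ := min (δ' / 2) (s0 / 2) with hδ
  have hδ0 : 0 < δ := by positivity
  have hδ1 : δ ≤ δ' / 2 := min_le_left _ _
  have hδ2 : δ ≤ s0 / 2 := min_le_right _ _
  have hnear : ∀ s, s ≠ s0 → |s - s0| ≤ δ → gg T s - gg T s0 ≤ -(c/4) * (s - s0) ^ 2 := by
    intro s hs hs'
    have := hb (y := s) (by rw [Real.dist_eq]; linarith) hs
    have hp : 0 < (s - s0) ^ 2 := by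
      have := sub_ne_zero.2 hs
      positivity
    rw [div_lt_iff₀ hp] at this
    exact this.le
  have hd2 : δ ^ 2 / s0 ^ 2 ≤ 1 := by
    rw [div_le_one (by positivity)]
    nlinarith
  refine ⟨c / 4 * (δ ^ 2 / s0 ^ 2), by positivity, fun s hs => ?_⟩
  have hsq := sq_nonneg (s - s0)
  have hle : c / 4 * (δ ^ 2 / s0 ^ 2) * (s - s0) ^ 2 ≤ c / 4 * (s - s0) ^ 2 := by
    have : c / 4 * (δ ^ 2 / s0 ^ 2) ≤ c / 4 * 1 := by gcongr
    nlinarith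
  have hpc : 0 ≤ c * (s - s0) ^ 2 := by positivity
  rcases le_or_gt s0 s with h2 | h2
  · have := hr s h2
    nlinarith
  · rcases le_or_gt (s0 - δ) s with h3 | h3
    · have := hnear s h2.ne (by rw [abs_le]; constructor <;> linarith)
      nlinarith
    · have m1 := (gg_mono T s0 hs0 h).monotoneOn (a := s) (b := s0 - δ) ⟨hs.le, h2.le⟩
        ⟨by linarith, by linarith⟩ h3.le
      have m2 := hnear (s0 - δ) (by linarith) (by
        rw [show s0 - δ - s0 = -δ by ring, abs_neg, abs_of_pos hδ0])
      rw [show s0 - δ - s0 = -δ by ring] at m2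
      have : c / 4 * (δ ^ 2 / s0 ^ 2) * (s - s0) ^ 2 ≤ c / 4 * δ ^ 2 := by
        have : (s - s0) ^ 2 ≤ s0 ^ 2 := by nlinarith
        calc c / 4 * (δ ^ 2 / s0 ^ 2) * (s - s0) ^ 2 ≤ c / 4 * (δ ^ 2 / s0 ^ 2) * s0 ^ 2 := by
              gcongr
          _ = _ := by field_simp
      nlinarith

lemma gauss_shift (b a : ℝ) (hb : 0 < b) :
    (∫ u : ℝ, Real.exp (-b * u ^ 2 + a * u)) = √(Real.pi / b) * Real.exp (a ^ 2 / (4 * b)) := by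
  have : ∀ u : ℝ, Real.exp (-b * u ^ 2 + a * u)
      = Real.exp (-b * (u - a / (2 * b)) ^ 2) * Real.exp (a ^ 2 / (4 * b)) := by
    intro u
    rw [← Real.exp_add]
    congr 1
    field_simp
    ring
  simp_rw [this]
  rw [integral_mul_const, integral_sub_right_eq_self (fun u => Real.exp (-b * u ^ 2)),
    integral_gaussian]

lemma gauss_shift_int (b a : ℝ) (hb : 0 < b) :
    Integrable (fun u : ℝ => Real.exp (-b * u ^ 2 + a * u)) := by
  have : ∀ u : ℝ, Real.exp (-b * u ^ 2 + a * u)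
      = Real.exp (-b * (u - a / (2 * b)) ^ 2) * Real.exp (a ^ 2 / (4 * b)) := by
    intro u
    rw [← Real.exp_add]
    congr 1
    field_simp
    ring
  simp_rw [this]
  exact ((integrable_exp_neg_mul_sq hb).comp_sub_right (a / (2 * b))).mul_const _

lemma sum_exp_spin (n : ℕ) (s : ℝ) :
    ∑ x : Fin n → Bool, Real.exp (s * ∑ i, spin (x i)) = (2 * Real.cosh s) ^ n := by
  have h := Finset.prod_univ_sum (fun _ : Fin n => (Finset.univ : Finset Bool))
    (fun _ b => Real.exp (s * spin b))
  simp only [Fintype.piFinset_univ] at h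
  simp_rw [Finset.mul_sum, Real.exp_sum]
  rw [← h]
  simp [spin, Real.cosh_eq]
  congr 1
  ring

lemma part_eq (n : ℕ) (hn : 0 < n) (θ : ℝ) (hθ : 0 < θ) :
    ∑ x : Fin n → Bool, Real.exp ((n : ℝ) * θ * mag n x ^ 2 / 2)
      = (√(2 * Real.pi * θ / n))⁻¹ *
        ∫ s : ℝ, Real.exp (-(n / (2 * θ)) * s ^ 2) * (2 * Real.cosh s) ^ n := by
  have hn' : (0:ℝ) < n := by exact_mod_cast hn
  have hb : 0 < n / (2 * θ) := by positivity
  have e : ∀ s : ℝ, Real.exp (-(n / (2 * θ)) * s ^ 2) * (2 * Real.cosh s) ^ n =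
      ∑ x : Fin n → Bool, Real.exp (-(n / (2 * θ)) * s ^ 2 + (∑ i, spin (x i)) * s) := by
    intro s
    rw [← sum_exp_spin, Finset.mul_sum]
    refine Finset.sum_congr rfl fun x _ => ?_
    rw [← Real.exp_add, mul_comm s]
  simp_rw [e]
  rw [integral_finsetSum _ (fun x _ => gauss_shift_int _ _ hb), Finset.mul_sum]
  refine Finset.sum_congr rfl fun x _ => ?_
  rw [gauss_shift _ _ hb]
  have e1 : Real.pi / (n / (2 * θ)) = 2 * Real.pi * θ / n := by field_simp
  rw [e1, ← mul_assoc, inv_mul_cancel₀ (by positivity), one_mul]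
  congr 1
  unfold mag
  field_simp
  ring

noncomputable def KI (T s0 h r u : ℝ) : ℝ :=
  Set.indicator {u : ℝ | 0 < s0 + u / r} (fun u => Real.exp (r ^ 2 * (gg T (s0 + u / r) - gg T s0) +
    h / (2 * T * (T + h / r)) * (2 * s0 * u + u ^ 2 / r - s0 ^ 2 * h / T))) u

lemma KI_meas (T s0 h r : ℝ) : Measurable (KI T s0 h r) := by
  unfold KI
  have := (gg_continuous T).measurable
  apply Measurable.indicator
  · fun_prop
  · exact measurableSet_lt measurable_const (by fun_prop)

lemma KI_pt (T s0 h u : ℝ) (hs0 : 0 < s0) (hT : 0 < T) (ht : Real.tanh s0 = s0 / T) :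
    Tendsto (fun r => KI T s0 h r u) atTop
      (𝓝 (Real.exp (-((1 / T - (1 - Real.tanh s0 ^ 2)) / 2) * u ^ 2 + (h * s0 / T ^ 2) * u) *
        Real.exp (-(s0 ^ 2 * h ^ 2 / (2 * T ^ 3))))) := by
  have hq := gg_quad T s0 ht
  set c := 1 / T - (1 - Real.tanh s0 ^ 2) with hcd
  have hdiv : ∀ a : ℝ, Tendsto (fun r : ℝ => a / r) atTop (𝓝 0) := fun a =>
    tendsto_const_nhds.div_atTop tendsto_id
  have hs : Tendsto (fun r : ℝ => s0 + u / r) atTop (𝓝 s0) := by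
    simpa using (hdiv u).const_add s0
  have hev : ∀ᶠ r : ℝ in atTop, 0 < s0 + u / r := hs.eventually (lt_mem_nhds hs0)
  have h1 : Tendsto (fun r : ℝ => r ^ 2 * (gg T (s0 + u / r) - gg T s0)) atTop
      (𝓝 (-(c / 2) * u ^ 2)) := by
    by_cases hu : u = 0
    · subst hu; simp
    · have hne : Tendsto (fun r : ℝ => s0 + u / r) atTop (𝓝[≠] s0) := by
        apply tendsto_nhdsWithin_iff.2 ⟨hs, ?_⟩
        filter_upwards [eventually_gt_atTop 0] with r hr
        have : u / r ≠ 0 := div_ne_zero hu hr.ne'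
        simpa using ⟨hu, hr.ne'⟩
      refine ((hq.comp hne).mul_const (u ^ 2)).congr' ?_
      filter_upwards [eventually_gt_atTop 0] with r hr
      simp only [Function.comp, add_sub_cancel_left]
      field_simp
  have h2 : Tendsto (fun r : ℝ => h / (2 * T * (T + h / r)) *
      (2 * s0 * u + u ^ 2 / r - s0 ^ 2 * h / T)) atTop
      (𝓝 (h / (2 * T * (T + 0)) * (2 * s0 * u + 0 - s0 ^ 2 * h / T))) := by
    apply Tendsto.mul
    · apply Tendsto.div tendsto_const_nhds
      · exact ((hdiv h).const_add T).const_mul _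
      · positivity
    · exact ((hdiv _).const_add _).sub_const _
  have h3 := (Real.continuous_exp.tendsto _).comp (h1.add h2)
  rw [← Real.exp_add]
  have e : -(c / 2) * u ^ 2 + h / (2 * T * (T + 0)) * (2 * s0 * u + 0 - s0 ^ 2 * h / T)
      = -(c / 2) * u ^ 2 + (h * s0 / T ^ 2) * u + -(s0 ^ 2 * h ^ 2 / (2 * T ^ 3)) := by
    field_simp
    ring
  rw [e] at h3
  refine h3.congr' ?_
  filter_upwards [hev] with r hr
  unfold KI
  rw [Set.indicator_of_mem (by exact hr)]
  rfl

lemma KI_lim (T s0 h : ℝ) (hs0 : 0 < s0) (hT : 0 < T) (ht : Real.tanh s0 = s0 / T)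
    (hc : 0 < 1 / T - (1 - Real.tanh s0 ^ 2)) :
    Tendsto (fun r => ∫ u, KI T s0 h r u) atTop
      (𝓝 (∫ u, Real.exp (-((1 / T - (1 - Real.tanh s0 ^ 2)) / 2) * u ^ 2 + (h * s0 / T ^ 2) * u) *
        Real.exp (-(s0 ^ 2 * h ^ 2 / (2 * T ^ 3))))) := by
  obtain ⟨κ, hκ, hb⟩ := gg_bound T s0 hs0 hT ht hc
  set B := |h| / T ^ 2 with hB
  have hB0 : 0 ≤ B := by positivity
  set C := (2 * B * s0) ^ 2 / κ + B * (s0 ^ 2 * |h| / T) with hC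
  apply tendsto_integral_filter_of_dominated_convergence
    (fun u => Real.exp (-(κ / 4) * u ^ 2) * Real.exp C)
  · exact Eventually.of_forall fun r => (KI_meas T s0 h r).aestronglyMeasurable
  · have hT2 : ∀ᶠ r : ℝ in atTop, T / 2 < T + h / r := by
      have : Tendsto (fun r : ℝ => T + h / r) atTop (𝓝 (T + 0)) :=
        (tendsto_const_nhds.div_atTop tendsto_id).const_add T
      exact this.eventually (lt_mem_nhds (by linarith))
    filter_upwards [hT2, eventually_gt_atTop 0, eventually_ge_atTop (2 * B / κ)] with r h1 h2 h3
    refine Eventually.of_forall fun u => ?_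
    unfold KI
    by_cases hu : 0 < s0 + u / r
    swap
    · rw [Set.indicator_of_notMem (by exact hu)]
      simp only [norm_zero]
      positivity
    rw [Set.indicator_of_mem (by exact hu), Real.norm_eq_abs, abs_of_pos (Real.exp_pos _),
      ← Real.exp_add]
    apply Real.exp_le_exp.2
    have g1 : r ^ 2 * (gg T (s0 + u / r) - gg T s0) ≤ -κ * u ^ 2 := by
      have := mul_le_mul_of_nonneg_left (hb _ hu) (sq_nonneg r)
      refine this.trans_eq ?_
      rw [add_sub_cancel_left]
      field_simp
    have g2 : |h / (2 * T * (T + h / r))| ≤ B := by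
      have hp : 0 < T + h / r := by linarith
      rw [abs_div, abs_of_pos (show 0 < 2 * T * (T + h / r) by positivity)]
      apply div_le_div_of_nonneg_left (abs_nonneg h) (by positivity)
      nlinarith
    have g3 : |2 * s0 * u + u ^ 2 / r - s0 ^ 2 * h / T| ≤
        2 * s0 * |u| + u ^ 2 / r + s0 ^ 2 * |h| / T := by
      have a1 : |2 * s0 * u| = 2 * s0 * |u| := by
        rw [abs_mul, abs_of_pos (by positivity)]
      have a2 : |u ^ 2 / r| = u ^ 2 / r := abs_of_nonneg (by positivity)
      have a3 : |s0 ^ 2 * h / T| = s0 ^ 2 * |h| / T := by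
        rw [abs_div, abs_mul, abs_of_pos hT, abs_of_nonneg (sq_nonneg s0)]
      have b1 := abs_sub (2 * s0 * u + u ^ 2 / r) (s0 ^ 2 * h / T)
      have b2 := abs_add_le (2 * s0 * u) (u ^ 2 / r)
      linarith
    have g4 : B * (u ^ 2 / r) ≤ κ / 2 * u ^ 2 := by
      rw [div_le_iff₀ hκ] at h3
      rw [← mul_div_assoc, div_le_iff₀ h2]
      nlinarith [sq_nonneg u]
    have g5 : 2 * B * s0 * |u| ≤ κ / 4 * u ^ 2 + (2 * B * s0) ^ 2 / κ := by
      rw [← sq_abs u]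
      have : 0 ≤ (κ / 2 * |u| - 2 * B * s0) ^ 2 / κ := by positivity
      have e : (κ / 2 * |u| - 2 * B * s0) ^ 2 / κ
        = κ / 4 * |u| ^ 2 + (2 * B * s0) ^ 2 / κ - 2 * B * s0 * |u| := by
        field_simp
        ring
      linarith
    have g6 : h / (2 * T * (T + h / r)) * (2 * s0 * u + u ^ 2 / r - s0 ^ 2 * h / T) ≤
        B * (2 * s0 * |u| + u ^ 2 / r + s0 ^ 2 * |h| / T) := by
      refine (le_abs_self _).trans ?_
      rw [abs_mul]
      gcongr
    rw [hC]
    linarith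
  · exact (integrable_exp_neg_mul_sq (by positivity)).mul_const _
  · exact Eventually.of_forall fun u => KI_pt T s0 h u hs0 hT ht

lemma Z_eq (T s0 h : ℝ) (hT : 0 < T) (n : ℕ) (hn : 0 < n) (hθ : 0 < T + h / √n) :
    ∑ x : Fin n → Bool, Real.exp ((n : ℝ) * (T + h / √n) * mag n x ^ 2 / 2) =
      Real.exp (n * Real.log 2 + n * gg T s0 + √n * h * s0 ^ 2 / (2 * T ^ 2)) *
      (2 * (√(2 * Real.pi * (T + h / √n)))⁻¹ * ∫ u, KI T s0 h (√n) u) := by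
  have hn' : (0:ℝ) < n := by exact_mod_cast hn
  rw [part_eq n hn _ hθ]
  set r := √(n:ℝ) with hr
  have hr0 : 0 < r := Real.sqrt_pos.2 hn'
  have hrn : (n:ℝ) = r ^ 2 := (Real.sq_sqrt hn'.le).symm
  set θ := T + h / r with hθd
  set F : ℝ → ℝ := fun s => Real.exp (-(n / (2 * θ)) * s ^ 2) * (2 * Real.cosh s) ^ n with hF
  have e1 : ∫ s, F s = 2 * ∫ s in Set.Ioi 0, F s := by
    rw [← integral_comp_abs]
    simp [hF]
  have e2 : ∫ s in Set.Ioi 0, F s = r⁻¹ * ∫ u, (Set.Ioi 0).indicator F (s0 + u / r) := by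
    rw [← integral_indicator measurableSet_Ioi,
      Measure.integral_comp_div (fun u => (Set.Ioi 0).indicator F (s0 + u)) r,
      integral_add_left_eq_self, abs_of_pos hr0, smul_eq_mul, inv_mul_cancel_left₀ hr0.ne']
  have e3 : ∀ u, (Set.Ioi 0).indicator F (s0 + u / r) =
      Real.exp (n * Real.log 2 + n * gg T s0 + r * h * s0 ^ 2 / (2 * T ^ 2)) * KI T s0 h r u := by
    intro u
    unfold KI
    by_cases hu : 0 < s0 + u / r
    · rw [Set.indicator_of_mem (by exact hu), Set.indicator_of_mem (by exact hu), ← Real.exp_add]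
      have hc := Real.cosh_pos (s0 + u / r)
      simp only [hF]
      rw [← Real.exp_log (show 0 < (2 * Real.cosh (s0 + u / r)) ^ n by positivity), ← Real.exp_add,
        Real.log_pow, Real.log_mul two_ne_zero hc.ne']
      congr 1
      have hg : gg T (s0 + u / r) = Real.log (Real.cosh (s0 + u / r))
        - (s0 + u / r) ^ 2 / (2 * T) := rfl
      rw [hg, hrn]
      have hh : h = (θ - T) * r := by rw [hθd]; field_simp; ring
      rw [← hθd]
      generalize Real.log (Real.cosh (s0 + u / r)) = L
      generalize θ = θ at *
      rw [hh]
      field_simp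
      ring
    · rw [Set.indicator_of_notMem (by exact hu), Set.indicator_of_notMem (by exact hu), mul_zero]
  rw [e1, e2]
  simp_rw [e3]
  rw [integral_const_mul]
  have e4 : √(2 * Real.pi * θ / n) = √(2 * Real.pi * θ) / r := by
    rw [Real.sqrt_div' _ hn'.le]
  rw [e4]
  have : 0 < √(2 * Real.pi * θ) := by positivity
  field_simp

lemma main_lim (T s0 h : ℝ) (hs0 : 0 < s0) (hT : 0 < T) (ht : Real.tanh s0 = s0 / T) :
    Tendsto (fun n : ℕ => Zcw n (T + h / √n) -
        (n * Real.log 2 + n * gg T s0 + √n * h * s0 ^ 2 / (2 * T ^ 2))) atTop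
      (𝓝 (Real.log (2 * (√(2 * Real.pi * T))⁻¹ *
          √(Real.pi / ((1 / T - (1 - Real.tanh s0 ^ 2)) / 2))) +
        ((h * s0 / T ^ 2) ^ 2 / (4 * ((1 / T - (1 - Real.tanh s0 ^ 2)) / 2))
          - s0 ^ 2 * h ^ 2 / (2 * T ^ 3)))) := by
  have hc : 0 < 1 / T - (1 - Real.tanh s0 ^ 2) := by
    have := key_ineq s0 hs0
    have e : Real.tanh s0 = s0 * (1 / T) := by rw [ht]; ring
    nth_rw 2 [e] at this
    have := lt_of_mul_lt_mul_left this hs0.le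
    linarith
  have hK := KI_lim T s0 h hs0 hT ht hc
  set c := 1 / T - (1 - Real.tanh s0 ^ 2) with hcd
  rw [integral_mul_const, gauss_shift _ _ (by positivity)] at hK
  have hsq : Tendsto (fun n : ℕ => √(n:ℝ)) atTop atTop :=
    Real.tendsto_sqrt_atTop.comp tendsto_natCast_atTop_atTop
  have hθ : Tendsto (fun n : ℕ => T + h / √(n:ℝ)) atTop (𝓝 T) := by
    simpa using (Tendsto.div_atTop (tendsto_const_nhds (x := h)) hsq).const_add T
  have h1 : Tendsto (fun n : ℕ => 2 * (√(2 * Real.pi * (T + h / √(n:ℝ))))⁻¹) atTop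
      (𝓝 (2 * (√(2 * Real.pi * T))⁻¹)) := by
    apply Tendsto.const_mul
    apply Tendsto.inv₀ _ (by positivity)
    exact (Real.continuous_sqrt.tendsto _).comp (hθ.const_mul _)
  have h2 := h1.mul (hK.comp hsq)
  have hpos : 0 < 2 * (√(2 * Real.pi * T))⁻¹ * (√(Real.pi / (c / 2)) *
      Real.exp ((h * s0 / T ^ 2) ^ 2 / (4 * (c / 2))) *
        Real.exp (-(s0 ^ 2 * h ^ 2 / (2 * T ^ 3)))) := by positivity
  have h3 := h2.log hpos.ne'
  have e : Real.log (2 * (√(2 * Real.pi * T))⁻¹ * (√(Real.pi / (c / 2)) *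
      Real.exp ((h * s0 / T ^ 2) ^ 2 / (4 * (c / 2))) *
        Real.exp (-(s0 ^ 2 * h ^ 2 / (2 * T ^ 3))))) =
      Real.log (2 * (√(2 * Real.pi * T))⁻¹ * √(Real.pi / (c / 2))) +
        ((h * s0 / T ^ 2) ^ 2 / (4 * (c / 2)) - s0 ^ 2 * h ^ 2 / (2 * T ^ 3)) := by
    rw [mul_assoc (√(Real.pi / (c / 2))), ← Real.exp_add, ← mul_assoc,
      Real.log_mul (by positivity) (Real.exp_pos _).ne', Real.log_exp]
    ring
  rw [e] at h3
  refine h3.congr' ?_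
  filter_upwards [eventually_gt_atTop 0, hθ.eventually (lt_mem_nhds hT),
    h2.eventually (lt_mem_nhds hpos)] with n hn hn2 hn3
  unfold Zcw
  simp only [Function.comp] at hn3 ⊢
  rw [Z_eq T s0 h hT n hn hn2, Real.log_mul (Real.exp_pos _).ne' hn3.ne', Real.log_exp]
  ring

theorem stmt11 (θ₀ h : ℝ) (hθ : 1 < θ₀) (m : ℝ → ℝ)
    (hm : ∀ θ : ℝ, 1 < θ → 0 < m θ ∧ Real.tanh (θ * m θ) = m θ) :
    Tendsto (fun n : ℕ =>
        Zcw n (θ₀ + h / Real.sqrt (n : ℝ)) - Zcw n θ₀ -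
          1 / 2 * Real.sqrt (n : ℝ) * h * m θ₀ ^ 2)
      atTop
      (nhds (m θ₀ ^ 2 * ((1 - m θ₀ ^ 2) / (1 - θ₀ * (1 - m θ₀ ^ 2))) * h ^ 2 / 2)) := by
  obtain ⟨hm0, ht⟩ := hm θ₀ hθ
  have hT : 0 < θ₀ := by linarith
  have hs0 : 0 < θ₀ * m θ₀ := by positivity
  have ht' : Real.tanh (θ₀ * m θ₀) = θ₀ * m θ₀ / θ₀ := by rw [ht]; field_simp
  have hk := key_ineq _ hs0
  have l1 := main_lim θ₀ (θ₀ * m θ₀) h hs0 hT ht'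
  have l0 := main_lim θ₀ (θ₀ * m θ₀) 0 hs0 hT ht'
  rw [ht] at l1 l0 hk
  generalize m θ₀ = μ at *
  have hD : 0 < 1 - θ₀ * (1 - μ ^ 2) := by
    have : μ * (θ₀ * (1 - μ ^ 2)) < μ * 1 := by linarith
    have := lt_of_mul_lt_mul_left this hm0.le
    linarith
  have e : 1 / θ₀ - (1 - μ ^ 2) = (1 - θ₀ * (1 - μ ^ 2)) / θ₀ := by field_simp
  rw [e] at l1 l0
  have l := l1.sub l0
  convert l using 2
  · simp only [zero_div, add_zero]
    field_simp
    ring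
  · generalize hDe : 1 - θ₀ * (1 - μ ^ 2) = D at *
    have : 1 - μ ^ 2 = (1 - D) / θ₀ := by rw [← hDe]; field_simp; ring
    rw [this]
    field_simp
    ring
end

section
/- Fix θ₀ > 1 and h ∈ ℝ, set θ_n := θ₀ + h/√n, and let X ∈ {−1,1}ⁿ have the Curie–Weiss distribution P_{θ_n,CW}. Then the conditional law of √n·(X̄ − m(θ_n)) given X̄ > 0 converges weakly to the Gaussian distribution N(0, σ²(θ₀)). -/
open MeasureTheory ProbabilityTheory Filter

/-- Unnormalized Curie–Weiss measure on `{-1,1}ⁿ` (encoded by `Fin n → Bool`). -/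
noncomputable def cwUnnorm (n : ℕ) (θ : ℝ) : Measure (Fin n → Bool) :=
  ∑ x : Fin n → Bool,
    ENNReal.ofReal (Real.exp ((n : ℝ) * θ * mag n x ^ 2 / 2)) • Measure.dirac x

/-- The Curie–Weiss model `P_{θ,CW}`. -/
noncomputable def cwMeasure (n : ℕ) (θ : ℝ) : Measure (Fin n → Bool) :=
  (cwUnnorm n θ Set.univ)⁻¹ • cwUnnorm n θ

/-- The Curie–Weiss model conditioned on positive magnetization. -/
noncomputable def cwMeasurePos (n : ℕ) (θ : ℝ) : Measure (Fin n → Bool) :=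
  (cwMeasure n θ {x | 0 < mag n x})⁻¹ • (cwMeasure n θ).restrict {x | 0 < mag n x}

namespace CWaux

lemma hasDerivAt_tanh (x : ℝ) : HasDerivAt Real.tanh (1 - Real.tanh x ^ 2) x := by
  have h := (Real.hasDerivAt_sinh x).div (Real.hasDerivAt_cosh x) (Real.cosh_pos x).ne'
  have e : Real.tanh = Real.sinh / Real.cosh := by
    funext y; simp [Real.tanh_eq_sinh_div_cosh]
  rw [e]
  refine h.congr_deriv ?_
  have := (Real.cosh_pos x).ne'
  rw [Pi.div_apply]
  field_simp

lemma strictMono_tanh : StrictMono Real.tanh := by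
  apply strictMono_of_deriv_pos
  intro x
  rw [(hasDerivAt_tanh x).deriv]
  linarith [Real.tanh_sq_lt_one x]

lemma continuous_tanh : Continuous Real.tanh :=
  continuous_iff_continuousAt.2 fun x => (hasDerivAt_tanh x).continuousAt

lemma strictConcave_tanh : StrictConcaveOn ℝ (Set.Ici 0) Real.tanh := by
  apply StrictAntiOn.strictConcaveOn_of_deriv (convex_Ici 0) continuous_tanh.continuousOn
  intro x hx y hy hxy
  rw [interior_Ici, Set.mem_Ioi] at hx hy
  rw [(hasDerivAt_tanh x).deriv, (hasDerivAt_tanh y).deriv]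
  have h1 := strictMono_tanh hxy
  have h2 := strictMono_tanh hx
  rw [Real.tanh_zero] at h2
  nlinarith

lemma g_neg {θ m w : ℝ} (hθ : 0 < θ) (hm : 0 < m) (h : Real.tanh (θ * m) = m) (hw : m < w) :
    Real.tanh (θ * w) < w := by
  have := strictConcave_tanh.slope_anti_adjacent (x := 0) (y := θ * m) (z := θ * w)
    (by simp) (by simp; nlinarith) (by positivity) (by nlinarith)
  rw [h, Real.tanh_zero, div_lt_div_iff₀ (by nlinarith) (by nlinarith)] at this
  have h2 : 0 < θ * m := by positivity
  have : (Real.tanh (θ * w) - w) * (θ * m) < 0 := by nlinarith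
  nlinarith

lemma g_pos {θ m w : ℝ} (hθ : 0 < θ) (hw : 0 < w) (h : Real.tanh (θ * m) = m) (hm : w < m) :
    w < Real.tanh (θ * w) := by
  have := strictConcave_tanh.slope_anti_adjacent (x := 0) (y := θ * w) (z := θ * m)
    (by simp) (by simp; nlinarith) (by positivity) (by nlinarith)
  rw [h, Real.tanh_zero, div_lt_div_iff₀ (by nlinarith) (by nlinarith)] at this
  have : 0 < (Real.tanh (θ * w) - w) * (θ * m) := by nlinarith
  by_contra hc
  push Not at hc
  have h2 : 0 < θ * m := by nlinarith
  nlinarith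

lemma slope_ge {θ m w : ℝ} (hθ : 0 < θ) (hm : 0 < m) (h : Real.tanh (θ * m) = m) (hw : m ≤ w) :
    Real.tanh (θ * w) - w ≤ -(2 * ((Real.tanh (θ * (m / 2)) - m / 2) / m)) * (w - m) := by
  rcases hw.eq_or_lt with rfl | hw
  · simp [h]
  have := strictConcave_tanh.slope_anti_adjacent (x := θ * (m / 2)) (y := θ * m) (z := θ * w)
    (by simp; positivity) (by simp; nlinarith) (by nlinarith) (by nlinarith)
  rw [h] at this
  generalize Real.tanh (θ * (m / 2)) = T at *
  generalize Real.tanh (θ * w) = S at *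
  have e1 : (S - m) / (θ * w - θ * m) = (S - m) / (w - m) / θ := by
    rw [← mul_sub, div_div, mul_comm]
  have e2 : (m - T) / (θ * m - θ * (m / 2)) = (m - T) / (m / 2) / θ := by
    field_simp; ring
  rw [e1, e2, div_lt_div_iff_of_pos_right hθ, div_lt_iff₀ (by linarith)] at this
  have e3 : -(2 * ((T - m / 2) / m)) * (w - m) = (m - T) / (m / 2) * (w - m) - (w - m) := by
    field_simp; ring
  linarith

lemma slope_le {θ m w : ℝ} (hθ : 0 < θ) (hm : 0 < m) (h : Real.tanh (θ * m) = m)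
    (hw0 : m / 2 ≤ w) (hw : w ≤ m) :
    2 * ((Real.tanh (θ * (m / 2)) - m / 2) / m) * (m - w) ≤ Real.tanh (θ * w) - w := by
  rcases hw.eq_or_lt with rfl | hw
  · simp [h]
  rcases hw0.eq_or_lt with rfl | hw0
  · apply le_of_eq
    field_simp; ring
  have := strictConcave_tanh.slope_anti_adjacent (x := θ * (m / 2)) (y := θ * w) (z := θ * m)
    (by simp; positivity) (by simp; nlinarith) (by nlinarith) (by nlinarith)
  rw [h] at this
  generalize Real.tanh (θ * (m / 2)) = T at *
  generalize Real.tanh (θ * w) = S at *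
  rw [← mul_sub, ← mul_sub, mul_comm θ, mul_comm θ, ← div_div, ← div_div,
    div_lt_div_iff_of_pos_right hθ, div_lt_div_iff₀ (by linarith) (by linarith)] at this
  have e3 : 2 * ((T - m / 2) / m) * (m - w) = (2 * T - m) * (m - w) / m := by
    field_simp
  rw [e3, div_le_iff₀ hm]
  nlinarith

noncomputable def LC (y : ℝ) : ℝ := Real.log (Real.cosh y)

lemma hasDerivAt_LC (x : ℝ) : HasDerivAt LC (Real.tanh x) x := by
  have := (Real.hasDerivAt_cosh x).log (Real.cosh_pos x).ne'
  rwa [← Real.tanh_eq_sinh_div_cosh] at this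

noncomputable def FF (θ w : ℝ) : ℝ := θ * w ^ 2 / 2 - LC (θ * w)

lemma hasDerivAt_FF (θ w : ℝ) : HasDerivAt (FF θ) (-θ * (Real.tanh (θ * w) - w)) w := by
  have h1 : HasDerivAt (fun w : ℝ => θ * w ^ 2 / 2) (θ * w) w := by
    have := ((hasDerivAt_pow 2 w).const_mul θ).div_const 2
    exact this.congr_deriv (by push_cast; ring)
  have h2 : HasDerivAt (fun w : ℝ => LC (θ * w)) (Real.tanh (θ * w) * (θ * 1)) w :=
    (hasDerivAt_LC (θ * w)).comp w ((hasDerivAt_id w).const_mul θ)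
  have := h1.sub h2
  exact this.congr_deriv (by ring)

noncomputable def kk (θ m : ℝ) : ℝ := θ * ((Real.tanh (θ * (m / 2)) - m / 2) / m)

lemma kk_pos {θ m : ℝ} (hθ : 0 < θ) (hm : 0 < m) (h : Real.tanh (θ * m) = m) : 0 < kk θ m := by
  have := g_pos hθ (half_pos hm) h (by linarith)
  exact mul_pos hθ (div_pos (by linarith) hm)

lemma FF_ge1 {θ m w : ℝ} (hθ : 0 < θ) (hm : 0 < m) (h : Real.tanh (θ * m) = m) (hw : m / 2 ≤ w) :
    kk θ m * (w - m) ^ 2 ≤ FF θ w - FF θ m := by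
  set k := kk θ m with hk
  have hd : ∀ x, HasDerivAt (fun w => FF θ w - k * (w - m) ^ 2)
      (-θ * (Real.tanh (θ * x) - x) - k * (2 * (x - m))) x := by
    intro x
    have h1 : HasDerivAt (fun w : ℝ => k * (w - m) ^ 2) (k * (2 * (x - m))) x := by
      have := (((hasDerivAt_id x).sub_const m).pow 2).const_mul k
      exact this.congr_deriv (by simp)
    exact (hasDerivAt_FF θ x).sub h1
  have hc : Continuous (fun w => FF θ w - k * (w - m) ^ 2) :=
    continuous_iff_continuousAt.2 fun x => (hd x).continuousAt
  rcases le_total m w with hmw | hmw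
  · have : MonotoneOn (fun w => FF θ w - k * (w - m) ^ 2) (Set.Ici m) := by
      apply monotoneOn_of_deriv_nonneg (convex_Ici m) hc.continuousOn
        (fun x _ => (hd x).differentiableAt.differentiableWithinAt)
      intro x hx
      rw [interior_Ici, Set.mem_Ioi] at hx
      rw [(hd x).deriv]
      have := mul_le_mul_of_nonneg_left (slope_ge hθ hm h hx.le) hθ.le
      simp only [hk, kk]; linarith
    have := this (by simp) (by simpa using hmw) hmw
    simp at this
    linarith
  · have : AntitoneOn (fun w => FF θ w - k * (w - m) ^ 2) (Set.Icc (m/2) m) := by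
      apply antitoneOn_of_deriv_nonpos (convex_Icc _ m) hc.continuousOn
        (fun x _ => (hd x).differentiableAt.differentiableWithinAt)
      intro x hx
      rw [interior_Icc, Set.mem_Ioo] at hx
      rw [(hd x).deriv]
      have := mul_le_mul_of_nonneg_left (slope_le hθ hm h hx.1.le hx.2.le) hθ.le
      simp only [hk, kk]; linarith
    have := this (by simp; exact ⟨hw, hmw⟩) (by simp; linarith) hmw
    simp at this
    linarith

lemma FF_ge {θ m w : ℝ} (hθ : 0 < θ) (hm : 0 < m) (h : Real.tanh (θ * m) = m) (hw : 0 ≤ w) :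
    kk θ m / 4 * (w - m) ^ 2 ≤ FF θ w - FF θ m := by
  have hk := kk_pos hθ hm h
  rcases le_total (m / 2) w with h1 | h1
  · have := FF_ge1 hθ hm h h1
    nlinarith [sq_nonneg (w - m)]
  · have h2 := FF_ge1 hθ hm h (le_refl (m / 2))
    have : AntitoneOn (FF θ) (Set.Icc 0 m) := by
      apply antitoneOn_of_deriv_nonpos (convex_Icc _ m)
        (continuous_iff_continuousAt.2 fun x => (hasDerivAt_FF θ x).continuousAt).continuousOn
        (fun x _ => (hasDerivAt_FF θ x).differentiableAt.differentiableWithinAt)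
      intro x hx
      rw [interior_Icc, Set.mem_Ioo] at hx
      rw [(hasDerivAt_FF θ x).deriv]
      have := g_pos hθ hx.1 h hx.2
      nlinarith
    have := this (by simp; constructor <;> linarith) (by simp; constructor <;> linarith) h1
    have e : (m / 2 - m) ^ 2 = m ^ 2 / 4 := by ring
    rw [e] at h2
    have : (w - m) ^ 2 ≤ m ^ 2 := by nlinarith
    nlinarith

lemma FF_zero (θ : ℝ) : FF θ 0 = 0 := by simp [FF, LC]

lemma FF_neg {θ m w c : ℝ} (hθ : 0 < θ) (hm : 0 < m) (h : Real.tanh (θ * m) = m)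
    (hc : c ≤ kk θ m / 8) (hc' : c ≤ θ / 4) (hc0 : 0 ≤ c) :
    c * (w - m) ^ 2 ≤ θ * w ^ 2 / 2 - FF θ m := by
  have := FF_ge hθ hm h le_rfl
  rw [FF_zero] at this
  have h1 : (w - m) ^ 2 ≤ 2 * w ^ 2 + 2 * m ^ 2 := by nlinarith [sq_nonneg (w + m)]
  have h2 : c * (w - m) ^ 2 ≤ c * (2 * w ^ 2 + 2 * m ^ 2) := mul_le_mul_of_nonneg_left h1 hc0
  have h3 : c * m ^ 2 ≤ kk θ m / 8 * m ^ 2 := mul_le_mul_of_nonneg_right hc (sq_nonneg _)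
  have h4 : c * w ^ 2 ≤ θ / 4 * w ^ 2 := mul_le_mul_of_nonneg_right hc' (sq_nonneg _)
  nlinarith

lemma kappa_pos {θ m : ℝ} (hθ : 0 < θ) (hm : 0 < m) (h : Real.tanh (θ * m) = m) :
    0 < 1 - θ * (1 - m ^ 2) := by
  have hy : 0 < θ * m := by positivity
  have h1 : θ * m < Real.sinh (θ * m) := Real.self_lt_sinh_iff.2 hy
  have h2 : 1 < Real.cosh (θ * m) := Real.one_lt_cosh.2 hy.ne'
  have h3 := Real.cosh_sq (θ * m)
  rw [Real.tanh_eq_sinh_div_cosh, div_eq_iff (by positivity)] at h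
  generalize Real.sinh (θ * m) = s at *
  generalize Real.cosh (θ * m) = c at *
  have h4 : θ * m < m * c ^ 2 := by rw [h] at h1; nlinarith
  have h5 : θ < c ^ 2 := by nlinarith
  have h6 : (1 - m ^ 2) * c ^ 2 = 1 := by rw [h] at h3; linarith
  have h7 : 0 < 1 - m ^ 2 := by
    by_contra hc
    push Not at hc
    nlinarith [sq_nonneg c]
  nlinarith

lemma tanh_lip (a b : ℝ) : |Real.tanh b - Real.tanh a| ≤ |b - a| := by
  have := convex_univ.norm_image_sub_le_of_norm_hasDerivWithin_le (𝕜 := ℝ) (f := Real.tanh)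
    (f' := fun x => 1 - Real.tanh x ^ 2) (C := 1) (x := a) (y := b) (s := Set.univ)
    (fun x _ => (hasDerivAt_tanh x).hasDerivWithinAt)
    (fun x _ => by
      rw [Real.norm_eq_abs, abs_le]
      constructor <;> nlinarith [Real.tanh_sq_lt_one x, sq_nonneg (Real.tanh x)])
    (Set.mem_univ _) (Set.mem_univ _)
  simpa using this

lemma taylor1 (a d : ℝ) :
    |Real.tanh (a + d) - Real.tanh a - d * (1 - Real.tanh a ^ 2)| ≤ 2 * |d| ^ 2 := by
  have := (convex_uIcc 0 d).norm_image_sub_le_of_norm_hasDerivWithin_le (𝕜 := ℝ)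
    (f := fun x => Real.tanh (a + x) - x * (1 - Real.tanh a ^ 2))
    (f' := fun x => (1 - Real.tanh (a + x) ^ 2) - (1 - Real.tanh a ^ 2)) (C := 2 * |d|)
    (x := 0) (y := d)
    (fun x _ => by
      have h1 : HasDerivAt (fun x => Real.tanh (a + x)) (1 - Real.tanh (a + x) ^ 2) x :=
        (hasDerivAt_tanh (a + x)).comp_const_add a x
      have h2 := (hasDerivAt_id x).mul_const (1 - Real.tanh a ^ 2)
      rw [one_mul] at h2
      exact (h1.sub h2).hasDerivWithinAt)
    (fun x hx => by
      have e : (1 - Real.tanh (a + x) ^ 2) - (1 - Real.tanh a ^ 2) =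
        (Real.tanh a - Real.tanh (a + x)) * (Real.tanh a + Real.tanh (a + x)) := by ring
      rw [e, Real.norm_eq_abs, abs_mul, mul_comm]
      have h1 := tanh_lip (a + x) a
      have h2 : |x| ≤ |d| := by simpa using Set.abs_sub_left_of_mem_uIcc hx
      have h3 : |a - (a + x)| = |x| := by simp
      have h4 : |Real.tanh a + Real.tanh (a + x)| ≤ 2 :=
        (abs_add_le _ _).trans (by linarith [Real.abs_tanh_lt_one a, Real.abs_tanh_lt_one (a + x)])
      exact mul_le_mul h4 (by linarith) (abs_nonneg _) (by norm_num))
    Set.left_mem_uIcc Set.right_mem_uIcc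
  simp only [Real.norm_eq_abs, add_zero, zero_mul, sub_zero] at this
  calc _ = _ := by congr 1; ring
    _ ≤ _ := this
    _ = _ := by ring

lemma taylor2 (a d : ℝ) :
    |LC (a + d) - LC a - d * Real.tanh a - d ^ 2 / 2 * (1 - Real.tanh a ^ 2)| ≤ 2 * |d| ^ 3 := by
  have := (convex_uIcc 0 d).norm_image_sub_le_of_norm_hasDerivWithin_le (𝕜 := ℝ)
    (f := fun x => LC (a + x) - x * Real.tanh a - x ^ 2 / 2 * (1 - Real.tanh a ^ 2))
    (f' := fun x => Real.tanh (a + x) - Real.tanh a - x * (1 - Real.tanh a ^ 2))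
    (C := 2 * |d| ^ 2)
    (x := 0) (y := d)
    (fun x _ => by
      have h1 : HasDerivAt (fun x => LC (a + x)) (Real.tanh (a + x)) x :=
        (hasDerivAt_LC (a + x)).comp_const_add a x
      have h2 := (hasDerivAt_id x).mul_const (Real.tanh a)
      rw [one_mul] at h2
      have h3 := ((hasDerivAt_pow 2 x).div_const 2).mul_const (1 - Real.tanh a ^ 2)
      have h4 : HasDerivAt (fun x : ℝ => x ^ 2 / 2 * (1 - Real.tanh a ^ 2))
        (x * (1 - Real.tanh a ^ 2)) x := by exact h3.congr_deriv (by simp)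
      exact ((h1.sub h2).sub h4).hasDerivWithinAt)
    (fun x hx => by
      have h2 : |x| ≤ |d| := by simpa using Set.abs_sub_left_of_mem_uIcc hx
      have := taylor1 a x
      rw [Real.norm_eq_abs]
      refine this.trans ?_
      gcongr)
    Set.left_mem_uIcc Set.right_mem_uIcc
  simp only [Real.norm_eq_abs, add_zero, zero_mul, sub_zero] at this
  calc _ = _ := by congr 1; ring
    _ ≤ _ := this
    _ = _ := by ring

end CWaux
namespace CWaux

noncomputable def SS (n : ℕ) : Finset (Fin n → Bool) := Finset.univ.filter (fun x => 0 < mag n x)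

noncomputable def HH (n : ℕ) (θ w : ℝ) : ℝ :=
  ∑ x ∈ SS n, Real.exp (n * θ * mag n x ^ 2 / 2 - n * θ * (w - mag n x) ^ 2 / 2)

lemma term_eq {n : ℕ} (θ w : ℝ) (x : Fin n → Bool) :
    Real.exp (n * θ * mag n x ^ 2 / 2 - n * θ * (w - mag n x) ^ 2 / 2) =
      Real.exp (-(n * (θ * w ^ 2 / 2))) * Real.exp (θ * w * (n * mag n x)) := by
  rw [← Real.exp_add]; congr 1; ring

lemma n_mag {n : ℕ} (hn : 0 < n) (x : Fin n → Bool) : n * mag n x = ∑ i, spin (x i) := by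
  unfold mag
  have : (n : ℝ) ≠ 0 := by positivity
  field_simp

lemma sum_all {n : ℕ} (t : ℝ) :
    ∑ x : Fin n → Bool, Real.exp (t * ∑ i, spin (x i)) = 2 ^ n * Real.exp (n * LC t) := by
  have h1 : ∀ x : Fin n → Bool, Real.exp (t * ∑ i, spin (x i)) =
      ∏ i, Real.exp (t * spin (x i)) := by
    intro x; rw [Finset.mul_sum, Real.exp_sum]
  simp_rw [h1]
  have h2 := Finset.prod_univ_sum (fun _ : Fin n => (Finset.univ : Finset Bool))
    (fun _ b => Real.exp (t * spin b))
  rw [Fintype.piFinset_univ] at h2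
  rw [← h2, Finset.prod_const, Finset.card_univ, Fintype.card_fin, Real.exp_nat_mul, ← mul_pow]
  congr 1
  rw [LC, Real.exp_log (Real.cosh_pos t), Real.cosh_eq]
  simp [spin]
  ring

lemma HH_eq {n : ℕ} (hn : 0 < n) (θ w : ℝ) :
    HH n θ w = Real.exp (-(n * (θ * w ^ 2 / 2))) *
      ∑ x ∈ SS n, Real.exp (θ * w * ∑ i, spin (x i)) := by
  unfold HH
  rw [Finset.mul_sum]
  refine Finset.sum_congr rfl fun x _ => ?_
  rw [term_eq, n_mag hn]

lemma exp_FF (n : ℕ) (θ w : ℝ) : Real.exp (-(n * (θ * w ^ 2 / 2))) *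
    (2 ^ n * Real.exp (n * LC (θ * w))) = 2 ^ n * Real.exp (-(n * FF θ w)) := by
  rw [mul_left_comm, ← Real.exp_add]; congr 2; unfold FF; ring

lemma HH_nonneg (n : ℕ) (θ w : ℝ) : 0 ≤ HH n θ w :=
  Finset.sum_nonneg fun _ _ => (Real.exp_pos _).le

lemma HH_le {n : ℕ} (hn : 0 < n) (θ w : ℝ) : HH n θ w ≤ 2 ^ n * Real.exp (-(n * FF θ w)) := by
  rw [HH_eq hn, ← exp_FF, ← sum_all]
  refine mul_le_mul_of_nonneg_left ?_ (Real.exp_pos _).le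
  exact Finset.sum_le_sum_of_subset_of_nonneg (Finset.subset_univ _)
    fun _ _ _ => (Real.exp_pos _).le

lemma card_le_two {n : ℕ} (s : Finset (Fin n → Bool)) : (s.card : ℝ) ≤ 2 ^ n := by
  have := Finset.card_le_univ s
  simp at this
  exact_mod_cast this

lemma HH_le_neg {n : ℕ} (hn : 0 < n) {θ w : ℝ} (hθ : 0 < θ) (hw : w ≤ 0) :
    HH n θ w ≤ 2 ^ n * Real.exp (-(n * (θ * w ^ 2 / 2))) := by
  rw [HH_eq hn, mul_comm]
  refine mul_le_mul_of_nonneg_right ?_ (Real.exp_pos _).le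
  refine le_trans ?_ (card_le_two (SS n))
  rw [Finset.card_eq_sum_ones, Nat.cast_sum]
  refine Finset.sum_le_sum fun x hx => ?_
  simp only [SS, Finset.mem_filter, Finset.mem_univ, true_and] at hx
  have h1 : 0 < ∑ i, spin (x i) := by rw [← n_mag hn]; positivity
  simp only [Nat.cast_one, Real.exp_le_one_iff]
  exact mul_nonpos_of_nonpos_of_nonneg (mul_nonpos_of_nonneg_of_nonpos hθ.le hw) h1.le

lemma HH_ge {n : ℕ} (hn : 0 < n) {θ w : ℝ} (hθ : 0 < θ) (hw : 0 ≤ w) :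
    2 ^ n * Real.exp (-(n * FF θ w)) - 2 ^ n * Real.exp (-(n * (θ * w ^ 2 / 2))) ≤ HH n θ w := by
  rw [HH_eq hn, ← exp_FF, ← sum_all, mul_comm (2 ^ n : ℝ), ← mul_sub]
  refine mul_le_mul_of_nonneg_left ?_ (Real.exp_pos _).le
  rw [sub_le_iff_le_add, ← Finset.sum_add_sum_compl (SS n)]
  gcongr
  refine le_trans ?_ (card_le_two (SS n)ᶜ)
  rw [Finset.card_eq_sum_ones, Nat.cast_sum]
  refine Finset.sum_le_sum fun x hx => ?_
  simp only [SS, Finset.mem_compl, Finset.mem_filter, Finset.mem_univ, true_and, not_lt] at hx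
  have h1 : ∑ i, spin (x i) ≤ 0 := by
    rw [← n_mag hn]; exact mul_nonpos_of_nonneg_of_nonpos (by positivity) hx
  simp only [Nat.cast_one, Real.exp_le_one_iff]
  exact mul_nonpos_of_nonneg_of_nonpos (by positivity) h1

noncomputable def hh (n : ℕ) (θ m u : ℝ) : ℝ :=
  HH n θ (m + u / Real.sqrt n) / (2 ^ n * Real.exp (-(n * FF θ m)))

lemma hh_nonneg (n : ℕ) (θ m u : ℝ) : 0 ≤ hh n θ m u :=
  div_nonneg (HH_nonneg _ _ _) (by positivity)

lemma n_sq {n : ℕ} (hn : 0 < n) (m u : ℝ) : n * (m + u / Real.sqrt n - m) ^ 2 = u ^ 2 := by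
  have h : 0 < (n : ℝ) := by positivity
  rw [add_sub_cancel_left, div_pow, Real.sq_sqrt h.le]; field_simp

lemma hh_le {n : ℕ} (hn : 0 < n) {θ m c : ℝ} (u : ℝ) (hθ : 0 < θ) (hm : 0 < m)
    (h : Real.tanh (θ * m) = m) (hc : c ≤ kk θ m / 8) (hc' : c ≤ θ / 4) (hc0 : 0 ≤ c) :
    hh n θ m u ≤ Real.exp (-c * u ^ 2) := by
  unfold hh
  rw [div_le_iff₀ (by positivity), mul_left_comm, ← Real.exp_add, ← n_sq hn m u]
  set w := m + u / Real.sqrt n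
  have hn' : (0 : ℝ) < n := by positivity
  rcases le_total 0 w with hw | hw
  · refine (HH_le hn θ w).trans ?_
    gcongr
    have h1 := FF_ge hθ hm h hw
    have h2 : c * (w - m) ^ 2 ≤ kk θ m / 4 * (w - m) ^ 2 :=
      mul_le_mul_of_nonneg_right (by linarith [kk_pos hθ hm h]) (sq_nonneg _)
    have h3 := mul_le_mul_of_nonneg_left (h2.trans h1) hn'.le
    linarith
  · refine (HH_le_neg hn hθ hw).trans ?_
    gcongr
    have h1 := FF_neg (w := w) hθ hm h hc hc' hc0
    have h3 := mul_le_mul_of_nonneg_left h1 hn'.le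
    linarith

lemma E_bound {n : ℕ} (hn : 0 < n) {θ m : ℝ} (u : ℝ) (h : Real.tanh (θ * m) = m) :
    |n * (FF θ (m + u / Real.sqrt n) - FF θ m) - θ * (1 - θ * (1 - m ^ 2)) * u ^ 2 / 2| ≤
      2 * |θ * u| ^ 3 / Real.sqrt n := by
  have hn' : (0 : ℝ) < n := by positivity
  have hs : 0 < Real.sqrt n := Real.sqrt_pos.2 hn'
  have hs2 : Real.sqrt n ^ 2 = n := Real.sq_sqrt hn'.le
  have := taylor2 (θ * m) (θ * u / Real.sqrt n)
  rw [h] at this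
  have h2 := mul_le_mul_of_nonneg_left this hn'.le
  rw [← abs_of_pos hn', ← abs_mul, abs_of_pos hn', ← abs_neg] at h2
  have e : θ * (m + u / Real.sqrt n) = θ * m + θ * u / Real.sqrt n := by ring
  unfold FF
  rw [e]
  set s := Real.sqrt n
  calc _ = _ := by
        congr 1
        rw [← hs2]
        field_simp
        ring
    _ ≤ _ := h2
    _ = _ := by
        rw [abs_div, abs_of_pos hs, ← hs2]
        field_simp

end CWaux
namespace CWaux

open Topology

lemma tendsto_hh {θ M : ℕ → ℝ} {θ₀ m₀ : ℝ} (hθ₀ : 0 < θ₀) (hm₀ : 0 < m₀)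
    (hθ : Tendsto θ atTop (𝓝 θ₀)) (hM : Tendsto M atTop (𝓝 m₀))
    (h : ∀ᶠ n in atTop, Real.tanh (θ n * M n) = M n) (u : ℝ) :
    Tendsto (fun n : ℕ => hh n (θ n) (M n) u) atTop
      (𝓝 (Real.exp (-(θ₀ * (1 - θ₀ * (1 - m₀ ^ 2)) * u ^ 2 / 2)))) := by
  have hsq : Tendsto (fun n : ℕ => Real.sqrt n) atTop atTop :=
    Real.tendsto_sqrt_atTop.comp tendsto_natCast_atTop_atTop
  set E : ℕ → ℝ := fun n => n * (FF (θ n) (M n + u / Real.sqrt n) - FF (θ n) (M n)) with hE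
  have hw : Tendsto (fun n : ℕ => M n + u / Real.sqrt n) atTop (𝓝 m₀) := by
    simpa using hM.add (hsq.const_div_atTop u)
  have hElim : Tendsto E atTop (𝓝 (θ₀ * (1 - θ₀ * (1 - m₀ ^ 2)) * u ^ 2 / 2)) := by
    have h1 : Tendsto (fun n => θ n * (1 - θ n * (1 - M n ^ 2)) * u ^ 2 / 2) atTop
        (𝓝 (θ₀ * (1 - θ₀ * (1 - m₀ ^ 2)) * u ^ 2 / 2)) :=
      (((hθ.mul ((hθ.mul ((hM.pow 2).const_sub 1)).const_sub 1)).mul_const _).div_const _)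
    have h2 : Tendsto (fun n : ℕ => 2 * |θ n * u| ^ 3 / Real.sqrt n) atTop (𝓝 0) :=
      (((hθ.mul_const u).abs.pow 3).const_mul 2).div_atTop hsq
    have h3 : Tendsto (fun n => E n - θ n * (1 - θ n * (1 - M n ^ 2)) * u ^ 2 / 2) atTop (𝓝 0) := by
      apply squeeze_zero_norm' _ h2
      filter_upwards [h, eventually_gt_atTop 0] with n hn hn0
      exact E_bound hn0 u hn
    simpa using h3.add h1
  have hLC : 0 < LC (θ₀ * m₀) := Real.log_pos (Real.one_lt_cosh.2 (by positivity))
  have hLCt : Tendsto (fun n : ℕ => (n : ℝ) * LC (θ n * (M n + u / Real.sqrt n))) atTop atTop := by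
    refine tendsto_natCast_atTop_atTop.atTop_mul_pos hLC ?_
    exact (hasDerivAt_LC _).continuousAt.tendsto.comp (hθ.mul hw)
  have hup : Tendsto (fun n => Real.exp (-E n)) atTop
      (𝓝 (Real.exp (-(θ₀ * (1 - θ₀ * (1 - m₀ ^ 2)) * u ^ 2 / 2)))) :=
    (Real.continuous_exp.tendsto _).comp hElim.neg
  have hlow : Tendsto (fun n : ℕ => Real.exp (-E n) -
      Real.exp (-E n) * Real.exp (-(n * LC (θ n * (M n + u / Real.sqrt n))))) atTop
      (𝓝 (Real.exp (-(θ₀ * (1 - θ₀ * (1 - m₀ ^ 2)) * u ^ 2 / 2)))) := by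
    have := hup.sub (hup.mul (Real.tendsto_exp_neg_atTop_nhds_zero.comp hLCt))
    simpa using this
  refine tendsto_of_tendsto_of_tendsto_of_le_of_le' hlow hup ?_ ?_
  · filter_upwards [eventually_gt_atTop 0, hθ.eventually_const_lt hθ₀,
      hw.eventually_const_lt hm₀] with n hn h1 h2
    unfold hh
    rw [le_div_iff₀ (by positivity)]
    refine le_trans (le_of_eq ?_) (HH_ge hn h1 h2.le)
    rw [sub_mul, mul_left_comm, ← Real.exp_add, mul_left_comm, ← Real.exp_add, ← Real.exp_add]
    congr 3
    · simp only [hE]; ring_nf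
    · simp only [hE, FF]; ring
  · filter_upwards [eventually_gt_atTop 0] with n hn
    unfold hh
    rw [div_le_iff₀ (by positivity)]
    refine le_trans (HH_le hn _ _) (le_of_eq ?_)
    rw [mul_left_comm, ← Real.exp_add]
    congr 2
    simp only [hE]; ring

lemma continuous_hh (n : ℕ) (θ m : ℝ) : Continuous (hh n θ m) := by
  unfold hh HH; fun_prop

lemma tendsto_II {θ M : ℕ → ℝ} {θ₀ m₀ : ℝ} (hθ₀ : 0 < θ₀) (hm₀ : 0 < m₀)
    (h₀ : Real.tanh (θ₀ * m₀) = m₀)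
    (hθ : Tendsto θ atTop (𝓝 θ₀)) (hM : Tendsto M atTop (𝓝 m₀))
    (h : ∀ᶠ n in atTop, Real.tanh (θ n * M n) = M n) (t : ℝ) :
    Tendsto (fun n : ℕ => ∫ u : ℝ, Complex.exp (t * u * Complex.I) * (hh n (θ n) (M n) u : ℂ)) atTop
      (𝓝 (∫ u : ℝ, Complex.exp (t * u * Complex.I) *
        (Real.exp (-(θ₀ * (1 - θ₀ * (1 - m₀ ^ 2)) * u ^ 2 / 2)) : ℝ))) := by
  have hk := kk_pos hθ₀ hm₀ h₀
  set c := min (kk θ₀ m₀ / 16) (θ₀ / 8) with hc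
  have hc0 : 0 < c := lt_min (by positivity) (by positivity)
  have hc1 : c < kk θ₀ m₀ / 8 := (min_le_left _ _).trans_lt (by linarith)
  have hc2 : c < θ₀ / 4 := (min_le_right _ _).trans_lt (by linarith)
  have hkt : Tendsto (fun n => kk (θ n) (M n)) atTop (𝓝 (kk θ₀ m₀)) := by
    unfold kk
    have := (continuous_tanh.tendsto _).comp (hθ.mul (hM.div_const 2))
    exact hθ.mul ((this.sub (hM.div_const 2)).div hM hm₀.ne')
  refine tendsto_integral_filter_of_dominated_convergence (fun u => Real.exp (-c * u ^ 2)) ?_ ?_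
    (integrable_exp_neg_mul_sq hc0) ?_
  · refine Eventually.of_forall fun n => Continuous.aestronglyMeasurable ?_
    have := continuous_hh n (θ n) (M n)
    fun_prop
  · filter_upwards [h, eventually_gt_atTop 0, hθ.eventually_const_lt hθ₀,
      hM.eventually_const_lt hm₀, (hkt.div_const 8).eventually_const_lt hc1,
      (hθ.div_const 4).eventually_const_lt hc2] with n h1 h2 h3 h4 h5 h6
    refine Eventually.of_forall fun u => ?_
    have e : (t : ℂ) * u * Complex.I = ((t * u : ℝ) : ℂ) * Complex.I := by push_cast; ring
    rw [norm_mul, e, Complex.norm_exp_ofReal_mul_I, one_mul, Complex.norm_real,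
      Real.norm_of_nonneg (hh_nonneg _ _ _ _)]
    exact hh_le h2 u h3 h4 h1 h5.le h6.le hc0.le
  · refine Eventually.of_forall fun u => ?_
    refine Tendsto.const_mul _ ?_
    exact (Complex.continuous_ofReal.tendsto _).comp (tendsto_hh hθ₀ hm₀ hθ hM h u)

lemma gauss_int {θ : ℝ} (hθ : 0 < θ) (t y : ℝ) :
    ∫ u : ℝ, Complex.exp (t * u * Complex.I) * (Real.exp (-(θ * (u - y) ^ 2 / 2)) : ℝ) =
      (Real.pi / (θ / 2) : ℂ) ^ (1 / 2 : ℂ) * Complex.exp (-(t ^ 2 / (2 * θ))) *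
        Complex.exp (t * y * Complex.I) := by
  have := integral_cexp_quadratic (b := (-(θ / 2) : ℂ))
    (by
      have : (-(θ / 2) : ℂ) = ((-(θ / 2) : ℝ) : ℂ) := by push_cast; ring
      rw [this, Complex.ofReal_re]; linarith) (t * Complex.I + θ * y) (-(θ * y ^ 2 / 2))
  rw [neg_neg] at this
  rw [mul_assoc, ← Complex.exp_add]
  have hθ' : (θ : ℂ) ≠ 0 := by exact_mod_cast hθ.ne'
  convert this using 2
  · funext u
    push_cast
    rw [← Complex.exp_add]
    congr 1
    ring
  · congr 1
    field_simp
    ring_nf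
    rw [Complex.I_sq]
    ring

lemma gauss_integrable {θ : ℝ} (hθ : 0 < θ) (t y : ℝ) :
    Integrable (fun u : ℝ =>
      Complex.exp (t * u * Complex.I) * (Real.exp (-(θ * (u - y) ^ 2 / 2)) : ℝ)) := by
  have := integrable_cexp_quadratic' (b := (-(θ / 2) : ℂ))
    (by
      have : (-(θ / 2) : ℂ) = ((-(θ / 2) : ℝ) : ℂ) := by push_cast; ring
      rw [this, Complex.ofReal_re]; linarith) (t * Complex.I + θ * y) (-(θ * y ^ 2 / 2))
  refine this.congr (Eventually.of_forall fun u => ?_)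
  simp only
  push_cast
  rw [← Complex.exp_add]
  congr 1
  ring

noncomputable def wt (n : ℕ) (θ : ℝ) (x : Fin n → Bool) : ℝ :=
  Real.exp ((n : ℝ) * θ * mag n x ^ 2 / 2)

noncomputable def AA (n : ℕ) (θ m t : ℝ) : ℂ :=
  ∑ x ∈ SS n, (wt n θ x : ℂ) * Complex.exp (t * (Real.sqrt n * (mag n x - m) : ℝ) * Complex.I)

lemma integral_hh {n : ℕ} (hn : 0 < n) {θ : ℝ} (m t : ℝ) (hθ : 0 < θ) :
    ∫ u : ℝ, Complex.exp (t * u * Complex.I) * (hh n θ m u : ℂ) =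
      ((2 ^ n * Real.exp (-(n * FF θ m)) : ℝ) : ℂ)⁻¹ * ((Real.pi / (θ / 2) : ℂ) ^ (1 / 2 : ℂ) *
        Complex.exp (-(t ^ 2 / (2 * θ)))) * AA n θ m t := by
  have hs : 0 < Real.sqrt n := Real.sqrt_pos.2 (by positivity)
  have hs2 : Real.sqrt n ^ 2 = n := Real.sq_sqrt (by positivity)
  have e : ∀ u : ℝ, Complex.exp (t * u * Complex.I) * (hh n θ m u : ℂ) =
      ∑ x ∈ SS n, ((2 ^ n * Real.exp (-(n * FF θ m)) : ℝ) : ℂ)⁻¹ * (wt n θ x : ℂ) *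
        (Complex.exp (t * u * Complex.I) *
          (Real.exp (-(θ * (u - Real.sqrt n * (mag n x - m)) ^ 2 / 2)) : ℝ)) := by
    intro u
    unfold hh HH
    rw [div_eq_inv_mul, Finset.mul_sum, Complex.ofReal_sum, Finset.mul_sum]
    refine Finset.sum_congr rfl fun x _ => ?_
    have : Real.exp (n * θ * mag n x ^ 2 / 2 - n * θ * (m + u / Real.sqrt n - mag n x) ^ 2 / 2) =
      wt n θ x * Real.exp (-(θ * (u - Real.sqrt n * (mag n x - m)) ^ 2 / 2)) := by
      unfold wt
      rw [← Real.exp_add]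
      congr 1
      set s := Real.sqrt n
      rw [← hs2]
      field_simp
      ring
    rw [this, Complex.ofReal_mul, Complex.ofReal_mul, Complex.ofReal_inv]
    ring
  simp_rw [e]
  rw [integral_finsetSum _ fun x _ => (gauss_integrable hθ t _).const_mul _, AA, Finset.mul_sum]
  refine Finset.sum_congr rfl fun x _ => ?_
  rw [integral_const_mul, gauss_int hθ]
  ring

lemma SS_nonempty {n : ℕ} (hn : 0 < n) : (SS n).Nonempty := by
  refine ⟨fun _ => true, ?_⟩
  have : (n : ℝ) ≠ 0 := by positivity
  rw [SS, Finset.mem_filter]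
  refine ⟨Finset.mem_univ _, ?_⟩
  simp [mag, spin, this]

lemma AA_zero (n : ℕ) (θ m : ℝ) : AA n θ m 0 = ((∑ x ∈ SS n, wt n θ x : ℝ) : ℂ) := by
  simp [AA]

lemma tendsto_AA {θ M : ℕ → ℝ} {θ₀ m₀ : ℝ} (hθ₀ : 0 < θ₀) (hm₀ : 0 < m₀)
    (h₀ : Real.tanh (θ₀ * m₀) = m₀)
    (hθ : Tendsto θ atTop (𝓝 θ₀)) (hM : Tendsto M atTop (𝓝 m₀))
    (h : ∀ᶠ n in atTop, Real.tanh (θ n * M n) = M n) (t : ℝ) :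
    Tendsto (fun n : ℕ => AA n (θ n) (M n) t / AA n (θ n) (M n) 0) atTop
      (𝓝 (Complex.exp (-(((1 - m₀ ^ 2) / (1 - θ₀ * (1 - m₀ ^ 2)) : ℝ) * t ^ 2 / 2)))) := by
  have hκ := kappa_pos hθ₀ hm₀ h₀
  have hκ' : 0 < θ₀ * (1 - θ₀ * (1 - m₀ ^ 2)) := by positivity
  have ht := tendsto_II hθ₀ hm₀ h₀ hθ hM h t
  have hz := tendsto_II hθ₀ hm₀ h₀ hθ hM h 0
  have key : ∀ s : ℝ, ∫ u : ℝ, Complex.exp (s * u * Complex.I) *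
        (Real.exp (-(θ₀ * (1 - θ₀ * (1 - m₀ ^ 2)) * u ^ 2 / 2)) : ℝ) =
      (Real.pi / ((θ₀ * (1 - θ₀ * (1 - m₀ ^ 2)) : ℝ) / 2) : ℂ) ^ (1 / 2 : ℂ) *
        Complex.exp (-(s ^ 2 / (2 * (θ₀ * (1 - θ₀ * (1 - m₀ ^ 2)) : ℝ)))) *
        Complex.exp (s * (0 : ℝ) * Complex.I) := by
    intro s
    have := gauss_int hκ' s 0
    simp only [sub_zero] at this
    exact this
  rw [key] at ht hz
  have hne : ∀ a : ℝ, 0 < a → (Real.pi / (a / 2) : ℂ) ^ (1 / 2 : ℂ) ≠ 0 := by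
    intro a ha
    rw [Ne, Complex.cpow_eq_zero_iff]
    have h1 : (a : ℂ) ≠ 0 := by exact_mod_cast ha.ne'
    have h2 : (Real.pi : ℂ) ≠ 0 := by exact_mod_cast Real.pi_ne_zero
    rintro ⟨h3, -⟩
    simp [h1] at h3
  have hC := hne _ hκ'
  have hq := ht.div hz (by simpa using hC)
  have hθc : Tendsto (fun n => ((θ n : ℝ) : ℂ)) atTop (𝓝 (θ₀ : ℂ)) :=
    (Complex.continuous_ofReal.tendsto _).comp hθ
  have h₀c : (θ₀ : ℂ) ≠ 0 := by exact_mod_cast hθ₀.ne'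
  have he : Tendsto (fun n => Complex.exp ((t : ℂ) ^ 2 / (2 * θ n))) atTop
      (𝓝 (Complex.exp ((t : ℂ) ^ 2 / (2 * θ₀)))) := by
    refine (Complex.continuous_exp.tendsto _).comp ?_
    exact tendsto_const_nhds.div (hθc.const_mul 2) (by simpa using h₀c)
  have hfin := hq.mul he
  have e1 : Complex.exp (-(((1 - m₀ ^ 2) / (1 - θ₀ * (1 - m₀ ^ 2)) : ℝ) * t ^ 2 / 2)) =
      (Real.pi / ((θ₀ * (1 - θ₀ * (1 - m₀ ^ 2)) : ℝ) / 2) : ℂ) ^ (1 / 2 : ℂ) *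
        Complex.exp (-(t ^ 2 / (2 * (θ₀ * (1 - θ₀ * (1 - m₀ ^ 2)) : ℝ)))) *
        Complex.exp (t * (0 : ℝ) * Complex.I) /
      ((Real.pi / ((θ₀ * (1 - θ₀ * (1 - m₀ ^ 2)) : ℝ) / 2) : ℂ) ^ (1 / 2 : ℂ) *
        Complex.exp (-((0 : ℝ) ^ 2 / (2 * (θ₀ * (1 - θ₀ * (1 - m₀ ^ 2)) : ℝ)))) *
        Complex.exp ((0 : ℝ) * (0 : ℝ) * Complex.I)) * Complex.exp ((t : ℂ) ^ 2 / (2 * θ₀)) := by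
    simp only [Complex.ofReal_zero, mul_zero, zero_mul, Complex.exp_zero, mul_one, ne_eq,
      OfNat.ofNat_ne_zero, not_false_eq_true, zero_pow, zero_div, neg_zero]
    rw [mul_div_cancel_left₀ _ hC, ← Complex.exp_add]
    congr 1
    have hκc : (1 - θ₀ * (1 - m₀ ^ 2) : ℂ) ≠ 0 := by exact_mod_cast hκ.ne'
    push_cast
    generalize hK : (1 - θ₀ * (1 - m₀ ^ 2) : ℂ) = K at hκc ⊢
    have hm' : (1 - m₀ ^ 2 : ℂ) = (1 - K) / θ₀ := by
      rw [← hK]; field_simp; ring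
    rw [hm']
    field_simp
    ring
  rw [e1]
  refine hfin.congr' ?_
  filter_upwards [eventually_gt_atTop 0, hθ.eventually_const_lt hθ₀] with n hn h1
  simp only [Pi.div_apply]
  rw [integral_hh hn (M n) t h1, integral_hh hn (M n) 0 h1]
  have hA : AA n (θ n) (M n) 0 ≠ 0 := by
    rw [AA_zero]
    exact_mod_cast (Finset.sum_pos (fun x _ => Real.exp_pos _) (SS_nonempty hn)).ne'
  have hD : ((2 ^ n * Real.exp (-(n * FF (θ n) (M n))) : ℝ) : ℂ) ≠ 0 := by
    exact_mod_cast (by positivity : (2 ^ n * Real.exp (-(n * FF (θ n) (M n))) : ℝ) ≠ 0)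
  have hP := hne _ h1
  simp only [Complex.ofReal_zero, ne_eq,
      OfNat.ofNat_ne_zero, not_false_eq_true, zero_pow, zero_div, neg_zero, Complex.exp_zero,
      mul_one]
  generalize (Real.pi / (θ n / 2) : ℂ) ^ (1 / 2 : ℂ) = P at *
  generalize ((2 ^ n * Real.exp (-(n * FF (θ n) (M n))) : ℝ) : ℂ) = D at *
  rw [Complex.exp_neg]
  have := Complex.exp_ne_zero ((t : ℂ) ^ 2 / (2 * θ n))
  generalize Complex.exp ((t : ℂ) ^ 2 / (2 * θ n)) = X at *
  field_simp

end CWaux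
namespace CWaux

open Topology

lemma tendsto_m {θ M : ℕ → ℝ} {θ₀ m₀ : ℝ} (hθ₀ : 0 < θ₀) (hm₀ : 0 < m₀)
    (h₀ : Real.tanh (θ₀ * m₀) = m₀) (hθ : Tendsto θ atTop (𝓝 θ₀))
    (h : ∀ᶠ n in atTop, 0 < M n ∧ Real.tanh (θ n * M n) = M n) :
    Tendsto M atTop (𝓝 m₀) := by
  have hT : ∀ w, Tendsto (fun n => Real.tanh (θ n * w)) atTop (𝓝 (Real.tanh (θ₀ * w))) :=
    fun w => (continuous_tanh.tendsto _).comp (hθ.mul_const w)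
  refine tendsto_order.2 ⟨fun a ha => ?_, fun b hb => ?_⟩
  · have hw0 : 0 < max a (m₀ / 2) := lt_max_of_lt_right (by linarith)
    have hw1 : max a (m₀ / 2) < m₀ := max_lt ha (by linarith)
    have haw : a ≤ max a (m₀ / 2) := le_max_left _ _
    generalize max a (m₀ / 2) = w at *
    filter_upwards [h, hθ.eventually_const_lt hθ₀,
      (hT w).eventually_const_lt (g_pos hθ₀ hw0 h₀ hw1)] with n h1 h2 h3
    refine lt_of_le_of_lt haw ?_
    by_contra hc
    push Not at hc
    rcases hc.eq_or_lt with hc | hc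
    · rw [← hc, h1.2] at h3; exact lt_irrefl _ h3
    · exact lt_asymm h3 (g_neg h2 h1.1 h1.2 hc)
  · filter_upwards [h, hθ.eventually_const_lt hθ₀,
      (hT b).eventually_lt_const (g_neg hθ₀ hm₀ h₀ hb)] with n h1 h2 h3
    by_contra hc
    push Not at hc
    rcases hc.eq_or_lt with hc | hc
    · rw [hc, h1.2] at h3; exact lt_irrefl _ h3
    · exact lt_asymm h3 (g_pos h2 (hm₀.trans hb) h1.2 hc)

instance (n : ℕ) (θ : ℝ) : IsFiniteMeasure (cwUnnorm n θ) := by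
  refine ⟨?_⟩
  simp [cwUnnorm, ENNReal.sum_lt_top]

lemma unnorm_real (n : ℕ) (θ : ℝ) (B : Set (Fin n → Bool)) :
    (cwUnnorm n θ).real B = ∑ x, wt n θ x * B.indicator 1 x := by
  unfold cwUnnorm Measure.real
  rw [Measure.finsetSum_apply, ENNReal.toReal_sum]
  · refine Finset.sum_congr rfl fun x _ => ?_
    rw [Measure.smul_apply, smul_eq_mul, ENNReal.toReal_mul,
      ENNReal.toReal_ofReal (Real.exp_pos _).le, Measure.dirac_apply' _ (Set.toFinite B).measurableSet]
    by_cases hx : x ∈ B <;> simp [hx, wt]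
  · intro x _
    rw [Measure.smul_apply, smul_eq_mul]
    finiteness

lemma unnorm_real_univ_pos (n : ℕ) (θ : ℝ) : 0 < (cwUnnorm n θ).real Set.univ := by
  rw [unnorm_real]
  simp only [Set.indicator_univ, Pi.one_apply, mul_one]
  exact Finset.sum_pos (fun x _ => Real.exp_pos _) ⟨fun _ => true, Finset.mem_univ _⟩

lemma cw_real (n : ℕ) (θ : ℝ) (B : Set (Fin n → Bool)) :
    (cwMeasure n θ).real B = ((cwUnnorm n θ).real Set.univ)⁻¹ * (cwUnnorm n θ).real B := by
  unfold cwMeasure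
  simp [Measure.real, ENNReal.toReal_mul]

instance (n : ℕ) (θ : ℝ) : IsFiniteMeasure (cwMeasure n θ) := by
  refine ⟨?_⟩
  have h : cwUnnorm n θ Set.univ ≠ 0 := by
    intro h
    have := unnorm_real_univ_pos n θ
    simp [Measure.real, h] at this
  rw [cwMeasure, Measure.smul_apply, smul_eq_mul]
  exact ENNReal.mul_lt_top (ENNReal.inv_lt_top.2 (pos_iff_ne_zero.2 h)) (measure_lt_top _ _)

lemma unnorm_pos (n : ℕ) (θ : ℝ) :
    (cwUnnorm n θ).real {x | 0 < mag n x} = ∑ x ∈ SS n, wt n θ x := by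
  rw [unnorm_real, SS, Finset.sum_filter]
  refine Finset.sum_congr rfl fun x _ => ?_
  by_cases hx : 0 < mag n x <;> simp [hx]

lemma cw_pos_ne {n : ℕ} (hn : 0 < n) (θ : ℝ) : cwMeasure n θ {x | 0 < mag n x} ≠ 0 := by
  intro h
  have h1 : (cwMeasure n θ).real {x | 0 < mag n x} = 0 := by simp [Measure.real, h]
  rw [cw_real, unnorm_pos] at h1
  have h2 := unnorm_real_univ_pos n θ
  have h3 : 0 < ∑ x ∈ SS n, wt n θ x :=
    Finset.sum_pos (fun x _ => Real.exp_pos _) (SS_nonempty hn)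
  have : 0 < ((cwUnnorm n θ).real Set.univ)⁻¹ * ∑ x ∈ SS n, wt n θ x := by positivity
  linarith

lemma prob_pos {n : ℕ} (hn : 0 < n) (θ : ℝ) : IsProbabilityMeasure (cwMeasurePos n θ) :=
  ProbabilityTheory.cond_isProbabilityMeasure (cw_pos_ne hn θ)

lemma cwpos_real_singleton {n : ℕ} (θ : ℝ) (x : Fin n → Bool) :
    (cwMeasurePos n θ).real {x} =
      if 0 < mag n x then wt n θ x / ∑ x ∈ SS n, wt n θ x else 0 := by
  have h : (cwMeasurePos n θ).real {x} = ((cwMeasure n θ).real {x | 0 < mag n x})⁻¹ *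
      (cwMeasure n θ).real ({x} ∩ {x | 0 < mag n x}) := by
    unfold cwMeasurePos
    rw [Measure.real, Measure.smul_apply, Measure.restrict_apply (measurableSet_singleton x)]
    simp [Measure.real, ENNReal.toReal_mul]
  rw [h, cw_real, cw_real, unnorm_pos]
  have hZ := unnorm_real_univ_pos n θ
  split_ifs with hx
  · have e : ({x} ∩ {x | 0 < mag n x} : Set (Fin n → Bool)) = {x} := by
      ext y; simp; rintro rfl; exact hx
    have e2 : (cwUnnorm n θ).real {x} = wt n θ x := by
      rw [unnorm_real, Finset.sum_eq_single x]
      · simp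
      · intro y _ hy; simp [hy]
      · simp
    rw [e, e2]
    field_simp
  · have e : ({x} ∩ {x | 0 < mag n x} : Set (Fin n → Bool)) = ∅ := by
      ext y; simp; rintro rfl; exact not_lt.1 hx
    rw [e]; simp

lemma charFun_eq {n : ℕ} (hn : 0 < n) (θ m t : ℝ) :
    charFun ((cwMeasurePos n θ).map (fun x => Real.sqrt n * (mag n x - m))) t =
      AA n θ m t / AA n θ m 0 := by
  have := prob_pos hn θ
  rw [charFun_apply_real, integral_map (measurable_of_finite _).aemeasurable
    (by fun_prop), integral_fintype Integrable.of_finite, AA_zero, AA, Finset.sum_div, SS,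
    Finset.sum_filter, ← SS]
  refine Finset.sum_congr rfl fun x _ => ?_
  rw [cwpos_real_singleton]
  split_ifs with hx
  · rw [Complex.real_smul]; push_cast; ring
  · simp

end CWaux

theorem stmt13 (θ₀ h : ℝ) (hθ : 1 < θ₀) (m : ℝ → ℝ)
    (hm : ∀ θ : ℝ, 1 < θ → 0 < m θ ∧ Real.tanh (θ * m θ) = m θ) :
    ∀ f : BoundedContinuousFunction ℝ ℝ,
      Tendsto (fun n : ℕ =>
          ∫ x, f (Real.sqrt (n : ℝ) * (mag n x - m (θ₀ + h / Real.sqrt (n : ℝ)))) ∂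
            cwMeasurePos n (θ₀ + h / Real.sqrt (n : ℝ)))
        atTop
        (nhds (∫ y, f y ∂ gaussianReal 0
          (Real.toNNReal ((1 - m θ₀ ^ 2) / (1 - θ₀ * (1 - m θ₀ ^ 2)))))) := by
  intro f
  obtain ⟨hm₀, h₀⟩ := hm θ₀ hθ
  have hθ₀ : 0 < θ₀ := by linarith
  have hsq : Tendsto (fun n : ℕ => Real.sqrt n) atTop atTop :=
    Real.tendsto_sqrt_atTop.comp tendsto_natCast_atTop_atTop
  set θ : ℕ → ℝ := fun n => θ₀ + h / Real.sqrt (n : ℝ) with hθdef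
  have hθt : Tendsto θ atTop (nhds θ₀) := by
    simpa using (hsq.const_div_atTop h).const_add θ₀
  have hev : ∀ᶠ n in atTop, 0 < m (θ n) ∧ Real.tanh (θ n * m (θ n)) = m (θ n) := by
    filter_upwards [hθt.eventually_const_lt hθ] with n hn using hm _ hn
  have hM : Tendsto (fun n => m (θ n)) atTop (nhds (m θ₀)) :=
    CWaux.tendsto_m hθ₀ hm₀ h₀ hθt hev
  have hκ := CWaux.kappa_pos hθ₀ hm₀ h₀
  have hm1 : m θ₀ ^ 2 < 1 := by
    have := Real.tanh_sq_lt_one (θ₀ * m θ₀)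
    rwa [h₀] at this
  have hσ : 0 ≤ (1 - m θ₀ ^ 2) / (1 - θ₀ * (1 - m θ₀ ^ 2)) := div_nonneg (by linarith) hκ.le
  set Y : (n : ℕ) → (Fin n → Bool) → ℝ := fun n x => Real.sqrt (n : ℝ) * (mag n x - m (θ n)) with hY
  have hYm : ∀ n, Measurable (Y n) := fun n => measurable_of_finite _
  let μ : ℕ → ProbabilityMeasure ℝ := fun k =>
    ⟨(cwMeasurePos (k + 1) (θ (k + 1))).map (Y (k + 1)), by
      have := CWaux.prob_pos k.succ_pos (θ (k + 1))
      exact Measure.isProbabilityMeasure_map (hYm (k + 1)).aemeasurable⟩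
  let μ₀ : ProbabilityMeasure ℝ :=
    ⟨gaussianReal 0 (Real.toNNReal ((1 - m θ₀ ^ 2) / (1 - θ₀ * (1 - m θ₀ ^ 2)))), inferInstance⟩
  have hconv : Tendsto μ atTop (nhds μ₀) := by
    rw [ProbabilityMeasure.tendsto_iff_tendsto_charFun]
    intro t
    have h1 := CWaux.tendsto_AA hθ₀ hm₀ h₀ hθt hM (hev.mono fun n hn => hn.2) t
    have h2 := (tendsto_add_atTop_iff_nat 1).2 h1
    have e : charFun (μ₀ : Measure ℝ) t = Complex.exp
        (-(((1 - m θ₀ ^ 2) / (1 - θ₀ * (1 - m θ₀ ^ 2)) : ℝ) * t ^ 2 / 2)) := by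
      change charFun (gaussianReal _ _) t = _
      rw [charFun_gaussianReal, ← Real.coe_toNNReal _ hσ]
      simp
    rw [e]
    refine h2.congr fun k => ?_
    exact (CWaux.charFun_eq k.succ_pos (θ (k + 1)) (m (θ (k + 1))) t).symm
  rw [ProbabilityMeasure.tendsto_iff_forall_integral_tendsto] at hconv
  rw [← tendsto_add_atTop_iff_nat 1]
  refine (hconv f).congr fun k => ?_
  exact integral_map (hYm (k + 1)).aemeasurable (by fun_prop)
end

section
/- Fix h ∈ ℝ, set θ_n := 1 + h/√n, and let X ∈ {−1,1}ⁿ have the Curie–Weiss distribution P_{θ_n,CW}. Then n^{1/4}·X̄ converges in distribution to the law H_h with density p_h(u) = exp(−u⁴/12 + hu²/2 − F(h)). -/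
open MeasureTheory Filter

/-- `F(h) = log ∫ exp(-u⁴/12 + h u²/2) du`. -/
noncomputable def Fcrit (h : ℝ) : ℝ :=
  Real.log (∫ u : ℝ, Real.exp (-(u ^ 4) / 12 + h * u ^ 2 / 2))

/-- The probability distribution `H_h` with density `exp(-u⁴/12 + h u²/2 - F(h))`. -/
noncomputable def Hmeasure (h : ℝ) : Measure ℝ :=
  MeasureTheory.volume.withDensity fun u =>
    ENNReal.ofReal (Real.exp (-(u ^ 4) / 12 + h * u ^ 2 / 2 - Fcrit h))

lemma nonneg_of_deriv {f f' : ℝ → ℝ} (h0 : f 0 = 0) (hd : ∀ x, HasDerivAt f (f' x) x)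
    (hp : ∀ x, 0 ≤ x → 0 ≤ f' x) (x : ℝ) (hx : 0 ≤ x) : 0 ≤ f x := by
  have hm : MonotoneOn f (Set.Ici 0) := by
    apply monotoneOn_of_deriv_nonneg (convex_Ici 0)
    · exact fun y _ => (hd y).continuousAt.continuousWithinAt
    · exact fun y _ => (hd y).differentiableAt.differentiableWithinAt
    · intro y hy
      rw [interior_Ici] at hy
      rw [(hd y).deriv]
      exact hp y (le_of_lt hy)
  have := hm (Set.mem_Ici.2 le_rfl) (Set.mem_Ici.2 hx) hx
  linarith

lemma hasDerivAt_th (x : ℝ) : HasDerivAt Real.tanh (1 - Real.tanh x ^ 2) x := by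
  have h := (Real.hasDerivAt_sinh x).div (Real.hasDerivAt_cosh x) (Real.cosh_pos x).ne'
  have e : Real.tanh = (Real.sinh / Real.cosh : ℝ → ℝ) := by
    funext y; simp [Real.tanh_eq_sinh_div_cosh]
  rw [e]
  refine h.congr_deriv ?_
  have := (Real.cosh_pos x).ne'
  show _ = 1 - (Real.sinh x / Real.cosh x) ^ 2
  field_simp

lemma hasDerivAt_lc (x : ℝ) : HasDerivAt (fun y => Real.log (Real.cosh y)) (Real.tanh x) x := by
  have h := (Real.hasDerivAt_cosh x).log (Real.cosh_pos x).ne'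
  rwa [← Real.tanh_eq_sinh_div_cosh] at h

lemma hasDerivAt_mono (k : ℕ) (c x : ℝ) : HasDerivAt (fun y : ℝ => c * y ^ (k+1)) (c * ((k+1) * x ^ k)) x := by
  have := (hasDerivAt_pow (k+1) x).const_mul c
  simpa using this

lemma th_nonneg (x : ℝ) (hx : 0 ≤ x) : 0 ≤ Real.tanh x := by
  rw [Real.tanh_eq_sinh_div_cosh]
  exact div_nonneg (Real.sinh_nonneg_iff.2 hx) (Real.cosh_pos x).le

lemma th_le (x : ℝ) (hx : 0 ≤ x) : Real.tanh x ≤ x := by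
  have := nonneg_of_deriv (f := fun y => y - Real.tanh y) (f' := fun y => 1 - (1 - Real.tanh y ^ 2))
    (by simp) (fun y => (hasDerivAt_id y).sub (hasDerivAt_th y)) (fun y _ => by nlinarith [sq_nonneg (Real.tanh y)]) x hx
  simpa using this

lemma th_ge (x : ℝ) (hx : 0 ≤ x) : x - 1/3 * x^3 ≤ Real.tanh x := by
  have := nonneg_of_deriv (f := fun y => Real.tanh y - (y - 1/3 * y^3)) 
    (f' := fun y => (1 - Real.tanh y ^ 2) - (1 - 1/3*((2:ℕ)+1) * y^2))
    (by simp) (fun y => (hasDerivAt_th y).sub ((hasDerivAt_id y).sub (by 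
       simpa [mul_assoc] using hasDerivAt_mono 2 (1/3) y))) (fun y hy => by 
        have := th_le y hy
        have h0 := th_nonneg y hy
        push_cast
        nlinarith ) x hx
  simpa using this

lemma th_le2 (x : ℝ) (hx : 0 ≤ x) : Real.tanh x ≤ x - 1/3 * x^3 + 2/15 * x^5 := by
  have := nonneg_of_deriv (f := fun y => (y - 1/3 * y^3 + 2/15*y^5) - Real.tanh y) 
    (f' := fun y => (1 - 1/3*(((2:ℕ)+1) * y^2) + 2/15*(((4:ℕ)+1)*y^4)) - (1 - Real.tanh y ^ 2))
    (by simp) (fun y => (((hasDerivAt_id y).sub (hasDerivAt_mono 2 (1/3) y)).add (hasDerivAt_mono 4 (2/15) y)).sub (hasDerivAt_th y)) (fun y hy => by 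
        have h1 := th_ge y hy
        have h0 := th_nonneg y hy
        push_cast
        by_cases h : y^2 ≤ 3
        · have h3 : 0 ≤ y - 1/3*y^3 := by nlinarith
          have h4 : (y - 1/3*y^3)^2 ≤ Real.tanh y ^ 2 := by gcongr
          have : 0 ≤ y^6 := by positivity
          nlinarith
        · push Not at h
          nlinarith [sq_nonneg (Real.tanh y)]) x hx
  simpa using this

lemma lc_ge (x : ℝ) (hx : 0 ≤ x) : x^2/2 - x^4/12 ≤ Real.log (Real.cosh x) := by
  have := nonneg_of_deriv (f := fun y => Real.log (Real.cosh y) - (1/2*y^2 - 1/12 * y^4)) 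
    (f' := fun y => Real.tanh y - (1/2*(((1:ℕ)+1) * y^1) - 1/12*(((3:ℕ)+1)*y^3)))
    (by simp) (fun y => (hasDerivAt_lc y).sub ((hasDerivAt_mono 1 (1/2) y).sub (hasDerivAt_mono 3 (1/12) y))) (fun y hy => by 
        have h1 := th_ge y hy
        push_cast
        nlinarith) x hx
  linarith

lemma lc_le (x : ℝ) (hx : 0 ≤ x) : Real.log (Real.cosh x) ≤ x^2/2 - x^4/12 + x^6/45 := by
  have := nonneg_of_deriv (f := fun y => (1/2*y^2 - 1/12 * y^4 + 1/45 * y^6) - Real.log (Real.cosh y)) 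
    (f' := fun y => (1/2*(((1:ℕ)+1) * y^1) - 1/12*(((3:ℕ)+1)*y^3) + 1/45*(((5:ℕ)+1)*y^5)) - Real.tanh y)
    (by simp) (fun y => (((hasDerivAt_mono 1 (1/2) y).sub (hasDerivAt_mono 3 (1/12) y)).add (hasDerivAt_mono 5 (1/45) y)).sub (hasDerivAt_lc y)) (fun y hy => by 
        have h1 := th_le2 y hy
        push_cast
        nlinarith) x hx
  linarith

lemma th_lower (x : ℝ) (hx : 0 ≤ x) : x / (1 + x) ≤ Real.tanh x := by
  rw [Real.tanh_eq_sinh_div_cosh, div_le_div_iff₀ (by positivity) (Real.cosh_pos x)]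
  have h1 : x ≤ Real.sinh x := Real.self_le_sinh_iff.2 hx
  have h2 : Real.cosh x - Real.sinh x = Real.exp (-x) := Real.cosh_sub_sinh x
  have h3 : Real.exp (-x) ≤ 1 := Real.exp_le_one_iff.2 (by linarith)
  nlinarith

lemma th_sq_lower (x : ℝ) (hx : 0 ≤ x) : x^2 / (2*(1 + x^2)) ≤ Real.tanh x ^ 2 := by
  have h := th_lower x hx
  have h2 : (x / (1+x))^2 ≤ Real.tanh x ^ 2 := by gcongr
  refine le_trans ?_ h2
  rw [div_pow]
  gcongr
  nlinarith [sq_nonneg (1 - x)]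

lemma th_up (x : ℝ) (hx : 0 ≤ x) : Real.tanh x ≤ x - 1/6 * (x^3/(1+x^2)) := by
  have := nonneg_of_deriv (f := fun y => (y - 1/6 * (y^3/(1+y^2))) - Real.tanh y) 
    (f' := fun y => (1 - 1/6 * (((3:ℕ) * y^(3-1) * (1+y^2) - y^3 * ((2:ℕ)* y^(2-1)))/(1+y^2)^2)) - (1 - Real.tanh y ^ 2))
    (by simp) (fun y => ((hasDerivAt_id y).sub (((hasDerivAt_pow 3 y).div ((hasDerivAt_pow 2 y).const_add 1) (by positivity)).const_mul _)).sub (hasDerivAt_th y)) (fun y hy => by 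
        have h1 := th_sq_lower y hy
        have : (((3:ℕ) * y^(3-1) * (1+y^2) - y^3 * ((2:ℕ)* y^(2-1)))/(1+y^2)^2) ≤ 6 * (y^2 / (2*(1 + y^2))) := by
          rw [div_le_iff₀ (by positivity)]
          have : 6 * (y^2 / (2*(1 + y^2))) * (1+y^2)^2 = 3 * y^2*(1+y^2) := by field_simp; ring
          rw [this]
          norm_num
          nlinarith [pow_nonneg hy 4]
        linarith) x hx
  linarith

lemma lc_up (x : ℝ) (hx : 0 ≤ x) : Real.log (Real.cosh x) ≤ x^2/2 - 1/24 * (x^4/(1+x^2)) := by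
  have := nonneg_of_deriv (f := fun y => (1/2*y^2 - 1/24 * (y^4/(1+y^2))) - Real.log (Real.cosh y)) 
    (f' := fun y => (1/2*(((1:ℕ)+1) * y^1) - 1/24 * (((4:ℕ) * y^(4-1) * (1+y^2) - y^4 * ((2:ℕ)* y^(2-1)))/(1+y^2)^2)) - Real.tanh y)
    (by simp) (fun y => ((hasDerivAt_mono 1 (1/2) y).sub (((hasDerivAt_pow 4 y).div ((hasDerivAt_pow 2 y).const_add 1) (by positivity)).const_mul _)).sub (hasDerivAt_lc y)) (fun y hy => by 
        have h1 := th_up y hy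
        have : (((4:ℕ) * y^(4-1) * (1+y^2) - y^4 * ((2:ℕ)* y^(2-1)))/(1+y^2)^2) ≤ 4 * (y^3 / ((1 + y^2))) := by
          rw [div_le_iff₀ (by positivity)]
          have : 4 * (y^3 / ((1 + y^2))) * (1+y^2)^2 = 4 * y^3*(1+y^2) := by field_simp
          rw [this]
          norm_num
          nlinarith [pow_nonneg hy 5]
        push_cast at *
        linarith) x hx
  linarith

lemma lc_abs (x : ℝ) : Real.log (Real.cosh x) = Real.log (Real.cosh |x|) := by rw [Real.cosh_abs]

lemma lc_ge' (x : ℝ) : x^2/2 - x^4/12 ≤ Real.log (Real.cosh x) := by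
  have := lc_ge |x| (abs_nonneg x)
  rwa [← lc_abs, sq_abs, Even.pow_abs (by decide)] at this

lemma lc_le' (x : ℝ) : Real.log (Real.cosh x) ≤ x^2/2 - x^4/12 + x^6/45 := by
  have := lc_le |x| (abs_nonneg x)
  rwa [← lc_abs, sq_abs, Even.pow_abs (by decide), Even.pow_abs (by decide)] at this

lemma lc_up' (x : ℝ) : Real.log (Real.cosh x) ≤ x^2/2 - 1/24 * (x^4/(1+x^2)) := by
  have := lc_up |x| (abs_nonneg x)
  rwa [← lc_abs, sq_abs, Even.pow_abs (by decide)] at this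


lemma cw_univ (n : ℕ) (θ : ℝ) : cwUnnorm n θ Set.univ =
    ENNReal.ofReal (∑ x : Fin n → Bool, Real.exp ((n : ℝ) * θ * mag n x ^ 2 / 2)) := by
  rw [ENNReal.ofReal_sum_of_nonneg (fun _ _ => (Real.exp_pos _).le)]
  simp [cwUnnorm]

lemma cw_sum_pos (n : ℕ) (θ : ℝ) :
    0 < ∑ x : Fin n → Bool, Real.exp ((n : ℝ) * θ * mag n x ^ 2 / 2) :=
  Finset.sum_pos (fun _ _ => Real.exp_pos _) Finset.univ_nonempty

instance cw_prob (n : ℕ) (θ : ℝ) : IsProbabilityMeasure (cwMeasure n θ) := by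
  constructor
  rw [cwMeasure, Measure.smul_apply, smul_eq_mul, cw_univ]
  apply ENNReal.inv_mul_cancel
  · simpa using cw_sum_pos n θ
  · exact ENNReal.ofReal_ne_top

lemma cw_integral (n : ℕ) (θ : ℝ) (f : (Fin n → Bool) → ℂ) :
    ∫ x, f x ∂cwMeasure n θ =
    (∑ x, (Real.exp ((n : ℝ) * θ * mag n x ^ 2 / 2) : ℂ) * f x) /
      ((∑ x : Fin n → Bool, Real.exp ((n : ℝ) * θ * mag n x ^ 2 / 2) : ℝ) : ℂ) := by
  rw [cwMeasure, integral_smul_measure, cw_univ, cwUnnorm, integral_finsetSum_measure]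
  · rw [ENNReal.toReal_inv, ENNReal.toReal_ofReal (cw_sum_pos n θ).le]
    simp only [integral_smul_measure, integral_dirac]
    rw [div_eq_inv_mul, Complex.real_smul]
    congr 1
    · push_cast; rfl
    · apply Finset.sum_congr rfl
      intro x _
      rw [ENNReal.toReal_ofReal (Real.exp_pos _).le, Complex.real_smul]
  · intro i _
    exact (integrable_dirac (by simp)).smul_measure ENNReal.ofReal_ne_top

noncomputable def GG (n : ℕ) (θ b u : ℝ) : ℝ :=
  Real.exp (-(b^2*θ*u^2)/2) * Real.cosh (θ*u/b)^n

lemma sum_spin (n : ℕ) (c : ℝ) :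
    ∑ x : Fin n → Bool, Real.exp (c * ∑ i, spin (x i)) = 2^n * Real.cosh c ^ n := by
  have := Finset.prod_univ_sum (R := ℝ) (ι := Fin n) (fun _ => (Finset.univ : Finset Bool))
    (fun _ s => Real.exp (c * spin s))
  simp only [Fintype.piFinset_univ] at this
  simp_rw [Finset.mul_sum, Real.exp_sum]
  rw [← this, ← mul_pow]
  simp only [Finset.prod_const, Finset.card_univ, Fintype.card_fin, Fintype.sum_bool, spin]
  rw [Real.cosh_eq]
  congr 1
  simp only [if_true, mul_one, Bool.false_eq_true, if_false, mul_neg]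
  ring

lemma key (n : ℕ) (θ b t : ℝ) (hθ : 0 < θ) (hb : 0 < b) (hn : b^4 = n) :
    (2:ℂ)^n * ∫ u : ℝ, Complex.exp (t * u * Complex.I) * (GG n θ b u : ℂ) =
    ((Real.pi : ℂ) / (b^2*θ/2 : ℝ)) ^ (1/2 : ℂ) * Complex.exp (-(t^2/(2*b^2*θ) : ℝ)) *
     ∑ x : Fin n → Bool, (Real.exp ((n : ℝ) * θ * mag n x ^ 2 / 2) : ℂ) *
       Complex.exp (t * (b * mag n x : ℝ) * Complex.I) := by
  have hn0 : (n:ℝ) ≠ 0 := by rw [← hn]; positivity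
  have hpt : ∀ u : ℝ, (2:ℂ)^n * (Complex.exp (t * u * Complex.I) * (GG n θ b u : ℂ)) =
      ∑ x : Fin n → Bool, Complex.exp ((-(b^2*θ/2 : ℝ)) * (u:ℂ)^2 +
        (t * Complex.I + (b^3 * θ * mag n x : ℝ)) * u + 0) := by
    intro u
    have h1 : (2:ℂ)^n * (GG n θ b u : ℂ) = ∑ x : Fin n → Bool,
        ((Real.exp (-(b^2*θ*u^2)/2) * Real.exp (θ*u/b * ∑ i, spin (x i)) : ℝ) : ℂ) := by
      rw [← Complex.ofReal_sum, ← Finset.mul_sum, sum_spin, GG]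
      push_cast; ring
    rw [mul_left_comm, h1, Finset.mul_sum]
    apply Finset.sum_congr rfl
    intro x _
    rw [← Real.exp_add, Complex.ofReal_exp, ← Complex.exp_add]
    congr 1
    have : θ*u/b * ∑ i, spin (x i) = b^3 * θ * mag n x * u := by
      rw [mag, ← hn]; field_simp
    rw [this]
    push_cast; ring
  have hB : 0 < ((b^2*θ/2 : ℝ) : ℂ).re := by rw [Complex.ofReal_re]; positivity
  have hB' : (-((b^2*θ/2 : ℝ) : ℂ)).re < 0 := by rw [Complex.neg_re]; linarith
  rw [← integral_const_mul]
  simp_rw [hpt]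
  rw [integral_finsetSum _ (fun x _ => integrable_cexp_quadratic hB _ _), Finset.mul_sum]
  apply Finset.sum_congr rfl
  intro x _
  rw [integral_cexp_quadratic hB', neg_neg, mul_assoc (_ ^ _) (Complex.exp _) (_ * _), Complex.ofReal_exp, ← Complex.exp_add,
    ← Complex.exp_add]
  congr 2
  rw [← hn]
  have hbc : (b:ℂ) ≠ 0 := by exact_mod_cast hb.ne'
  have hθc : (θ:ℂ) ≠ 0 := by exact_mod_cast hθ.ne'
  push_cast
  field_simp
  ring_nf
  simp only [Complex.I_sq]
  ring

lemma GG_eq (n : ℕ) (θ b u : ℝ) :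
    GG n θ b u = Real.exp (-(b^2*θ*u^2)/2 + n * Real.log (Real.cosh (θ*u/b))) := by
  rw [GG, Real.exp_add, mul_comm (n:ℝ), Real.exp_mul, Real.exp_log (Real.cosh_pos _),
    Real.rpow_natCast]

lemma GG_bound (h : ℝ) (n : ℕ) (θ b u : ℝ) (hb : 0 < b) (hn : b^4 = n) (hθ : θ = 1 + h / b^2)
    (h1 : 1/2 ≤ θ) (h2 : θ ≤ 2) (hK : 3072 * (|h|+1) ≤ b^2) :
    GG n θ b u ≤ Real.exp (192*(|h|+1)^2) * Real.exp (-1 * u^2) := by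
  rw [GG_eq, ← Real.exp_add, Real.exp_le_exp, ← hn]
  have hl := lc_up' (θ*u/b)
  have h3 : -(b^2*θ*u^2)/2 + b^4 * Real.log (Real.cosh (θ*u/b)) ≤ 
     -(b^2*θ*u^2)/2 + b^4 * ((θ*u/b)^2/2 - 1/24 * ((θ*u/b)^4/(1+(θ*u/b)^2))) := by gcongr
  refine h3.trans ?_
  have h4 : -(b^2*θ*u^2)/2 + b^4 * ((θ*u/b)^2/2 - 1/24 * ((θ*u/b)^4/(1+(θ*u/b)^2)))
     = θ*h/2*u^2 - 1/24 * (θ^4*u^4 / (1 + θ^2*u^2/b^2)) := by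
    have : h = (θ - 1) * b^2 := by rw [hθ]; field_simp; ring
    rw [this]
    field_simp
    ring
  rw [h4]
  have h5 : θ*h/2*u^2 ≤ |h| * u^2 := by
    have : θ*h/2 ≤ |h| := by
      have := le_abs_self h
      have := abs_nonneg h
      nlinarith
    gcongr
  set A := |h| + 1 with hA
  have hA0 : 1 ≤ A := by have := abs_nonneg h; linarith
  have hw : θ^2*u^2/b^2 ≤ u^2/(768*A) := by
    rw [div_le_div_iff₀ (by positivity) (by positivity)]
    have : θ^2 ≤ 4 := by nlinarith
    calc θ^2*u^2*(768*A) ≤ 4*u^2*(768*A) := by gcongr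
      _ = u^2*(3072*A) := by ring
      _ ≤ _ := by gcongr
  have hθ4 : 1/16 ≤ θ^4 := by
    calc (1/16:ℝ) = (1/2)^4 := by norm_num
      _ ≤ θ^4 := by gcongr
  have h6 : (1/16*u^4) / (1 + u^2/(768*A)) ≤ θ^4*u^4 / (1 + θ^2*u^2/b^2) := by gcongr
  have h7 : A * u^2 - 192*A^2 ≤ 1/24 * ((1/16*u^4) / (1 + u^2/(768*A))) := by
    rw [← mul_div_assoc, le_div_iff₀ (by positivity)]
    have e : (A * u^2 - 192*A^2) * (1 + u^2/(768*A)) = A*u^2 - 192*A^2 + u^4/768 - A*u^2/4 := by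
      field_simp; ring
    rw [e]
    nlinarith [sq_nonneg (u^2 - 384*A), sq_nonneg (u^2 - 288*A), sq_nonneg u, sq_nonneg (u^2)]
  have : |h| = A - 1 := by simp [hA]
  rw [this] at h5
  nlinarith

lemma tendsto_b : Tendsto (fun n : ℕ => (n:ℝ) ^ ((1:ℝ)/4)) atTop atTop :=
  (tendsto_rpow_atTop (by norm_num)).comp tendsto_natCast_atTop_atTop

lemma b_pow (n : ℕ) : ((n:ℝ) ^ ((1:ℝ)/4))^4 = n := by
  rw [← Real.rpow_natCast, ← Real.rpow_mul (by positivity)]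
  norm_num

lemma b_sq (n : ℕ) : ((n:ℝ) ^ ((1:ℝ)/4))^2 = Real.sqrt n := by
  rw [Real.sqrt_eq_rpow, ← Real.rpow_natCast, ← Real.rpow_mul (by positivity)]
  norm_num

noncomputable def th (h : ℝ) (n : ℕ) : ℝ := 1 + h / Real.sqrt (n : ℝ)
noncomputable def bb (n : ℕ) : ℝ := (n:ℝ) ^ ((1:ℝ)/4)

lemma tendsto_bsq : Tendsto (fun n : ℕ => bb n ^ 2) atTop atTop :=
  (tendsto_pow_atTop (by norm_num)).comp tendsto_b

lemma th_eq (h : ℝ) (n : ℕ) : th h n = 1 + h / bb n ^ 2 := by rw [th, bb, b_sq]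

lemma tendsto_th (h : ℝ) : Tendsto (th h) atTop (nhds 1) := by
  have := (tendsto_bsq.const_div_atTop h).const_add 1
  rw [add_zero] at this
  exact this.congr (fun n => (th_eq h n).symm)

lemma exponent_tendsto (h u : ℝ) : Tendsto (fun n : ℕ => -(bb n^2*th h n*u^2)/2 +
      n * Real.log (Real.cosh (th h n*u/bb n))) atTop (nhds (-(u ^ 4) / 12 + h * u ^ 2 / 2)) := by
  have hT := tendsto_th h
  have hlow : Tendsto (fun n : ℕ => th h n * h * u^2/2 - th h n ^4 * u^4/12) atTop
      (nhds (-(u ^ 4) / 12 + h * u ^ 2 / 2)) := by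
    have := (((hT.mul_const h).mul_const (u^2)).div_const 2).sub (((hT.pow 4).mul_const (u^4)).div_const 12)
    convert this using 2
    ring
  have hup : Tendsto (fun n : ℕ => (th h n * h * u^2/2 - th h n ^4 * u^4/12) +
      th h n ^6 * u^6/45 / bb n ^ 2) atTop
      (nhds (-(u ^ 4) / 12 + h * u ^ 2 / 2)) := by
    have := hlow.add ((((hT.pow 6).mul_const (u^6)).div_const 45).div_atTop tendsto_bsq)
    simpa using this
  have hpos : ∀ᶠ n : ℕ in atTop, 0 < bb n := tendsto_b.eventually_gt_atTop 0
  refine tendsto_of_tendsto_of_tendsto_of_le_of_le' hlow hup ?_ ?_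
  · filter_upwards [hpos] with n hb
    have hn : (n:ℝ) = bb n ^ 4 := (b_pow n).symm
    have hh : h = (th h n - 1) * bb n^2 := by rw [th_eq]; field_simp; ring
    have := lc_ge' (th h n * u/bb n)
    rw [hn]
    calc _ = -(bb n^2*th h n*u^2)/2 + bb n^4 * ((th h n * u/bb n)^2/2 - (th h n * u/bb n)^4/12) := by
          generalize th h n = θ at *
          rw [hh]; field_simp; ring
      _ ≤ _ := by gcongr
  · filter_upwards [hpos] with n hb
    have hn : (n:ℝ) = bb n ^ 4 := (b_pow n).symm
    have hh : h = (th h n - 1) * bb n^2 := by rw [th_eq]; field_simp; ring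
    have := lc_le' (th h n * u/bb n)
    rw [hn]
    calc _ ≤ -(bb n^2*th h n*u^2)/2 + bb n^4 * ((th h n * u/bb n)^2/2 - (th h n * u/bb n)^4/12 + (th h n * u/bb n)^6/45) := by gcongr
      _ = _ := by
          generalize th h n = θ at *
          rw [hh]; field_simp; ring

lemma ev_bound (h : ℝ) : ∀ᶠ n : ℕ in atTop, 0 < bb n ∧ 1/2 ≤ th h n ∧
    ∀ u, GG n (th h n) (bb n) u ≤ Real.exp (192*(|h|+1)^2) * Real.exp (-1 * u^2) := by
  filter_upwards [tendsto_b.eventually_gt_atTop 0,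
    tendsto_bsq.eventually_ge_atTop (3072 * (|h|+1)),
    (tendsto_th h).eventually (Icc_mem_nhds (a := 1/2) (b := 2) (by norm_num) (by norm_num))]
    with n h1 h2 h3
  exact ⟨h1, h3.1, fun u => GG_bound h n _ _ u h1 (b_pow n) (th_eq h n) h3.1 h3.2 h2⟩

lemma GG_tendsto (h u : ℝ) : Tendsto (fun n : ℕ => GG n (th h n) (bb n) u) atTop
    (nhds (Real.exp (-(u ^ 4) / 12 + h * u ^ 2 / 2))) := by
  simp_rw [GG_eq]
  exact (Real.continuous_exp.tendsto _).comp (exponent_tendsto h u)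

lemma GG_cont (n : ℕ) (θ b : ℝ) : Continuous (GG n θ b) := by
  unfold GG
  have := Real.continuous_cosh
  fun_prop

lemma bound_int (C : ℝ) : Integrable (fun u : ℝ => C * Real.exp (-1 * u^2)) :=
  (integrable_exp_neg_mul_sq one_pos).const_mul _

lemma J_tendsto (h t : ℝ) : Tendsto (fun n : ℕ =>
    ∫ u : ℝ, Complex.exp (t * u * Complex.I) * (GG n (th h n) (bb n) u : ℂ)) atTop
    (nhds (∫ u : ℝ, Complex.exp (t * u * Complex.I) *
      (Real.exp (-(u ^ 4) / 12 + h * u ^ 2 / 2) : ℂ))) := by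
  refine tendsto_integral_filter_of_dominated_convergence _ ?_ ?_ (bound_int (Real.exp (192*(|h|+1)^2))) ?_
  · refine Eventually.of_forall fun n => Continuous.aestronglyMeasurable ?_
    have := GG_cont n (th h n) (bb n)
    fun_prop
  · filter_upwards [ev_bound h] with n hn
    refine Eventually.of_forall fun u => ?_
    have e : (t:ℂ) * u * Complex.I = ((t*u : ℝ) : ℂ) * Complex.I := by push_cast; ring
    rw [norm_mul, e, Complex.norm_exp_ofReal_mul_I, one_mul, Complex.norm_real, Real.norm_eq_abs,
      abs_of_nonneg]
    · exact hn.2.2 u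
    · rw [GG_eq]; positivity
  · refine Eventually.of_forall fun u => ?_
    exact ((Complex.continuous_ofReal.tendsto _).comp (GG_tendsto h u)).const_mul _

lemma dens_int (h : ℝ) : Integrable (fun u : ℝ => Real.exp (-(u ^ 4) / 12 + h * u ^ 2 / 2)) := by
  refine (bound_int (Real.exp (192*(|h|+1)^2))).mono' (by fun_prop) (Eventually.of_forall fun u => ?_)
  rw [Real.norm_eq_abs, abs_of_pos (Real.exp_pos _)]
  exact le_of_tendsto (GG_tendsto h u) ((ev_bound h).mono fun n hn => hn.2.2 u)

lemma dens_pos (h : ℝ) : 0 < ∫ u : ℝ, Real.exp (-(u ^ 4) / 12 + h * u ^ 2 / 2) :=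
  integral_exp_pos (dens_int h)

lemma dens_norm (h u : ℝ) : Real.exp (-(u ^ 4) / 12 + h * u ^ 2 / 2 - Fcrit h) =
    (∫ u : ℝ, Real.exp (-(u ^ 4) / 12 + h * u ^ 2 / 2))⁻¹ * Real.exp (-(u ^ 4) / 12 + h * u ^ 2 / 2) := by
  rw [Real.exp_sub, Fcrit, Real.exp_log (dens_pos h), div_eq_inv_mul]

instance H_prob (h : ℝ) : IsProbabilityMeasure (Hmeasure h) := by
  constructor
  rw [Hmeasure, withDensity_apply _ MeasurableSet.univ, Measure.restrict_univ,
    ← ofReal_integral_eq_lintegral_ofReal]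
  · simp_rw [dens_norm, integral_const_mul]
    rw [inv_mul_cancel₀ (dens_pos h).ne', ENNReal.ofReal_one]
  · simp_rw [dens_norm]
    exact (dens_int h).const_mul _
  · exact Eventually.of_forall fun u => (Real.exp_pos _).le

lemma H_integral (h : ℝ) (f : ℝ → ℂ) : ∫ u, f u ∂Hmeasure h =
    (∫ u : ℝ, f u * (Real.exp (-(u ^ 4) / 12 + h * u ^ 2 / 2) : ℂ)) /
     ((∫ u : ℝ, Real.exp (-(u ^ 4) / 12 + h * u ^ 2 / 2) : ℝ) : ℂ) := by
  rw [Hmeasure, integral_withDensity_eq_integral_toReal_smul (by fun_prop) (by simp), div_eq_inv_mul,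
    ← integral_const_mul]
  congr 1
  funext u
  rw [ENNReal.toReal_ofReal (Real.exp_pos _).le, dens_norm, Complex.real_smul]
  push_cast
  ring

lemma mag_meas (n : ℕ) (c : ℝ) : Measurable (fun x : Fin n → Bool => c * mag n x) :=
  measurable_of_finite _

lemma charFun_cw (h t : ℝ) (n : ℕ) (hb : 0 < bb n) (hθ : 0 < th h n) :
    charFun ((cwMeasure n (th h n)).map (fun x => bb n * mag n x)) t =
    Complex.exp ((t^2/2/th h n/(bb n^2) : ℝ)) *
    ((∫ u : ℝ, Complex.exp (t * u * Complex.I) * (GG n (th h n) (bb n) u : ℂ)) /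
     (∫ u : ℝ, Complex.exp ((0:ℝ) * u * Complex.I) * (GG n (th h n) (bb n) u : ℂ))) := by
  rw [charFun_apply_real, integral_map (mag_meas n _).aemeasurable (by fun_prop), cw_integral]
  have k1 := key n (th h n) (bb n) t hθ hb (b_pow n)
  have k0 := key n (th h n) (bb n) 0 hθ hb (b_pow n)
  have hs := cw_sum_pos n (th h n)
  have e0 : (∑ x : Fin n → Bool, (Real.exp ((n : ℝ) * th h n * mag n x ^ 2 / 2) : ℂ) *
       Complex.exp ((0:ℝ) * (bb n * mag n x : ℝ) * Complex.I)) =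
       ((∑ x : Fin n → Bool, Real.exp ((n : ℝ) * th h n * mag n x ^ 2 / 2) : ℝ) : ℂ) := by
    push_cast
    simp
  rw [e0] at k0
  set S0 : ℂ := ((∑ x : Fin n → Bool, Real.exp ((n : ℝ) * th h n * mag n x ^ 2 / 2) : ℝ) : ℂ) with hS0
  have hS0' : S0 ≠ 0 := by rw [hS0]; exact_mod_cast hs.ne'
  have hK : ((Real.pi : ℂ) / (bb n^2*th h n/2 : ℝ)) ^ (1/2 : ℂ) ≠ 0 := by
    rw [Complex.cpow_ne_zero_iff]
    left
    have : bb n^2*th h n/2 ≠ 0 := by positivity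
    exact div_ne_zero (by exact_mod_cast Real.pi_ne_zero) (by exact_mod_cast this)
  have h2 : (2:ℂ)^n ≠ 0 := pow_ne_zero _ two_ne_zero
  have k0' : Complex.exp (-((0:ℝ)^2/(2*(bb n)^2*th h n) : ℝ)) = 1 := by simp
  rw [k0', mul_one] at k0
  have ee : Complex.exp ((t^2/2/th h n/(bb n^2) : ℝ)) *
      Complex.exp (-(t^2/(2*(bb n)^2*th h n) : ℝ)) = 1 := by
    rw [← Complex.exp_add]
    have : t^2/2/th h n/(bb n^2) = t^2/(2*(bb n)^2*th h n) := by field_simp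
    rw [this, add_neg_cancel, Complex.exp_zero]
  rw [← mul_div_mul_left _ (∫ u : ℝ, Complex.exp ((0:ℝ) * u * Complex.I) * (GG n (th h n) (bb n) u : ℂ)) h2,
    k1, k0, mul_assoc, mul_div_mul_left _ _ hK, ← mul_div_assoc, ← mul_assoc, ee, one_mul]

lemma charFun_tendsto (h t : ℝ) : Tendsto (fun n : ℕ =>
    charFun ((cwMeasure n (th h n)).map (fun x => bb n * mag n x)) t) atTop
    (nhds (charFun (Hmeasure h) t)) := by
  rw [charFun_apply_real, H_integral]
  have h0 := J_tendsto h 0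
  have e0 : (∫ u : ℝ, Complex.exp ((0:ℝ) * u * Complex.I) *
      (Real.exp (-(u ^ 4) / 12 + h * u ^ 2 / 2) : ℂ)) =
      ((∫ u : ℝ, Real.exp (-(u ^ 4) / 12 + h * u ^ 2 / 2) : ℝ) : ℂ) := by
    rw [← integral_complex_ofReal]
    congr 1
    funext u
    simp
  rw [e0] at h0
  have hexp : Tendsto (fun n : ℕ => Complex.exp ((t^2/2/th h n/(bb n^2) : ℝ))) atTop (nhds 1) := by
    have h1 : Tendsto (fun n : ℕ => t^2/2/th h n/(bb n^2)) atTop (nhds 0) :=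
      ((tendsto_const_nhds (x := t^2/2)).div (tendsto_th h) one_ne_zero).div_atTop tendsto_bsq
    have := ((Complex.continuous_exp.comp Complex.continuous_ofReal).tendsto 0).comp h1
    simpa [Function.comp_def] using this
  have := hexp.mul ((J_tendsto h t).div h0 (by exact_mod_cast (dens_pos h).ne'))
  rw [one_mul] at this
  refine this.congr' ?_
  filter_upwards [ev_bound h] with n hn
  exact (charFun_cw h t n hn.1 (by linarith [hn.2.1])).symm

theorem stmt14 (h : ℝ) :
    ∀ f : BoundedContinuousFunction ℝ ℝ,
      Tendsto (fun n : ℕ =>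
          ∫ x, f ((n : ℝ) ^ ((1 : ℝ) / 4) * mag n x) ∂
            cwMeasure n (1 + h / Real.sqrt (n : ℝ)))
        atTop (nhds (∫ u, f u ∂ Hmeasure h)) := by
  intro f
  have hp : ∀ n : ℕ, IsProbabilityMeasure
      ((cwMeasure n (th h n)).map (fun x => bb n * mag n x)) :=
    fun n => Measure.isProbabilityMeasure_map (mag_meas n _).aemeasurable
  have := ProbabilityMeasure.tendsto_of_tendsto_charFun
    (μ := fun n : ℕ => (⟨(cwMeasure n (th h n)).map (fun x => bb n * mag n x), hp n⟩ : ProbabilityMeasure ℝ))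
    (μ₀ := ⟨Hmeasure h, H_prob h⟩) (fun t => charFun_tendsto h t)
  have this2 := ProbabilityMeasure.tendsto_iff_forall_integral_tendsto.1 this f
  refine this2.congr fun n => ?_
  exact integral_map (mag_meas n _).aemeasurable f.continuous.aestronglyMeasurable
end

section
/- Let a, b, c be positive integers and C > 0. For each n, let B_n be a symmetric n×n real matrix with max_{i,j} |B_n(i,j)| ≤ C/n, let Z₁,…,Z_n be i.i.d. real random variables with mean 0, variance 1, and with sup_n E|Z₁|^{a+2b+2c} < ∞, and let R₁,…,R_n be i.i.d. standard Gaussian random variables. Then E[ (√n·Z̄)^a (ZᵀB_nZ)^b (ZᵀB_n²Z)^c ] − E[ (√n·R̄)^a (RᵀB_nR)^b (RᵀB_n²R)^c ] → 0 as n → ∞, where Z̄ = (1/n)Σᵢ Zᵢ and R̄ = (1/n)Σᵢ Rᵢ. -/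
open MeasureTheory ProbabilityTheory Filter

noncomputable def qf {n : ℕ} (B : Matrix (Fin n) (Fin n) ℝ) (v : Fin n → ℝ) : ℝ :=
  ∑ i, ∑ j, v i * B i j * v j

/-- `P` is a homogeneous form of degree `K` with coefficients of size `D * n^(-K/2)`. -/
def IsForm15 (n K : ℕ) (D : ℝ) (P : (Fin n → ℝ) → ℝ) : Prop :=
  ∃ w : (Fin K → Fin n) → ℝ, (∀ f, |w f| ≤ D * (1 / Real.sqrt n) ^ K) ∧
    ∀ z, P z = ∑ f, w f * ∏ k, z (f k)

lemma IsForm15.mul {n K K' : ℕ} {D D' : ℝ} {P P' : (Fin n → ℝ) → ℝ}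
    (h : IsForm15 n K D P) (h' : IsForm15 n K' D' P') :
    IsForm15 n (K + K') (D * D') (fun z => P z * P' z) := by
  obtain ⟨w, hw, hP⟩ := h
  obtain ⟨w', hw', hP'⟩ := h'
  refine ⟨fun f => w ((Fin.appendEquiv K K').symm f).1 * w' ((Fin.appendEquiv K K').symm f).2,
    fun f => ?_, fun z => ?_⟩
  · rw [abs_mul, pow_add, mul_mul_mul_comm]
    exact mul_le_mul (hw _) (hw' _) (abs_nonneg _) ((abs_nonneg _).trans (hw ((Fin.appendEquiv K K').symm f).1))
  · show P z * P' z = _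
    rw [hP, hP', Finset.sum_mul_sum, ← Finset.sum_product', Finset.univ_product_univ]
    refine Fintype.sum_equiv (Fin.appendEquiv K K') _ _ fun x => ?_
    beta_reduce
    rw [Equiv.symm_apply_apply, Fin.prod_univ_add]
    simp [Fin.appendEquiv]
    ring

lemma IsForm15.pow {n K : ℕ} {D : ℝ} {P : (Fin n → ℝ) → ℝ}
    (h : IsForm15 n K D P) (m : ℕ) :
    IsForm15 n (m * K) (D ^ m) (fun z => P z ^ m) := by
  induction m with
  | zero =>
    rw [Nat.zero_mul]
    exact ⟨fun _ => 1, by simp, by simp⟩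
  | succ m ih =>
    rw [Nat.succ_mul]
    simp only [pow_succ]
    exact ih.mul h

lemma isForm15_mean (n : ℕ) :
    IsForm15 n 1 1 (fun z => Real.sqrt (n : ℝ) * ((∑ i, z i) / n)) := by
  refine ⟨fun _ => 1 / Real.sqrt n, fun f => ?_, fun z => ?_⟩
  · rw [abs_of_nonneg (by positivity)]; simp
  · rw [← Finset.mul_sum, ← Real.sqrt_div_self']
    rw [← (Equiv.funUnique (Fin 1) (Fin n)).symm.sum_comp]
    simp
    ring

lemma isForm15_qf {n : ℕ} (B : Matrix (Fin n) (Fin n) ℝ) (C : ℝ)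
    (hB : ∀ i j, |B i j| ≤ C / n) : IsForm15 n 2 C (qf B) := by
  refine ⟨fun f => B (f 0) (f 1), fun f => ?_, fun z => ?_⟩
  · have := hB (f 0) (f 1)
    rwa [div_pow, Real.sq_sqrt (by positivity), one_pow, mul_one_div]
  · unfold qf
    rw [← Finset.sum_product', Finset.univ_product_univ]
    refine Fintype.sum_equiv (finTwoArrowEquiv (Fin n)).symm _ _ fun x => ?_
    simp [Fin.prod_univ_two]
    ring

lemma sq_bound15 {n : ℕ} (B : Matrix (Fin n) (Fin n) ℝ) (C : ℝ)
    (hB : ∀ i j, |B i j| ≤ C / n) (i j : Fin n) : |(B * B) i j| ≤ C ^ 2 / n := by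
  rw [Matrix.mul_apply]
  have hn : (0 : ℝ) < n := by exact_mod_cast i.pos
  calc |∑ k, B i k * B k j| ≤ ∑ k, |B i k * B k j| := Finset.abs_sum_le_sum_abs _ _
    _ ≤ ∑ k : Fin n, (C / n) * (C / n) := by
      refine Finset.sum_le_sum fun k _ => ?_
      rw [abs_mul]
      exact mul_le_mul (hB _ _) (hB _ _) (abs_nonneg _) ((abs_nonneg _).trans (hB i k))
    _ = C ^ 2 / n := by
      simp; field_simp

/-- fibre size -/
def fib15 {n K : ℕ} (f : Fin K → Fin n) (i : Fin n) : ℕ :=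
  (Finset.univ.filter fun k => f k = i).card

lemma sum_fib15 {n K : ℕ} (f : Fin K → Fin n) : ∑ i, fib15 f i = K := by
  unfold fib15
  rw [← Finset.card_eq_sum_card_fiberwise (s := Finset.univ) (t := Finset.univ) (f := f)
    (by simp)]
  simp

lemma prod_fib15 {n K : ℕ} (f : Fin K → Fin n) (z : Fin n → ℝ) :
    ∏ k, z (f k) = ∏ i, z i ^ fib15 f i := by
  unfold fib15
  rw [← Finset.prod_fiberwise Finset.univ f]
  refine Finset.prod_congr rfl fun i _ => ?_
  rw [← Finset.prod_const]
  refine Finset.prod_congr rfl fun k hk => ?_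
  simp at hk
  rw [hk]

lemma bad15 {n K : ℕ} (f : Fin K → Fin n) (h1 : ∀ i, fib15 f i ≠ 1)
    (h3 : ∃ i, 3 ≤ fib15 f i) : (Finset.univ.image f).card ≤ (K - 1) / 2 := by
  have h : 2 * (Finset.univ.image f).card < K := by
    conv_rhs => rw [← sum_fib15 f]
    have hle : ∀ i, (if i ∈ Finset.univ.image f then 2 else 0) ≤ fib15 f i := by
      intro i
      split_ifs with hi
      · have : 0 < fib15 f i := by
          unfold fib15
          rw [Finset.card_pos]
          simp at hi
          obtain ⟨k, hk⟩ := hi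
          exact ⟨k, by simp [hk]⟩
        have := h1 i
        omega
      · omega
    have : ∑ i, (if i ∈ Finset.univ.image f then 2 else 0) < ∑ i, fib15 f i := by
      obtain ⟨i, hi⟩ := h3
      refine Finset.sum_lt_sum (fun i _ => hle i) ⟨i, Finset.mem_univ _, ?_⟩
      split_ifs <;> omega
    rw [← Finset.sum_filter] at this
    simp only [Finset.sum_const, smul_eq_mul, Finset.filter_univ_mem] at this
    omega
  omega

open Classical in
lemma count15 (n K m : ℕ) (hK : 0 < K) :
    (Finset.univ.filter fun f : Fin K → Fin n => (Finset.univ.image f).card ≤ m).card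
      ≤ m ^ K * n ^ m := by
  have : (Finset.univ.filter fun f : Fin K → Fin n => (Finset.univ.image f).card ≤ m) ⊆
      (Finset.univ : Finset ((Fin K → Fin m) × (Fin m → Fin n))).image (fun p => p.2 ∘ p.1) := by
    intro f hf
    simp only [Finset.mem_filter, Finset.mem_univ, true_and] at hf
    simp only [Finset.mem_image, Finset.mem_univ, true_and]
    set S := Finset.univ.image f with hS
    let e := S.equivFin
    let k0 : Fin K := ⟨0, hK⟩
    refine ⟨(fun k => Fin.castLE hf (e ⟨f k, by simp [hS]⟩),
      fun i => if h : (i : ℕ) < S.card then (e.symm ⟨i, h⟩ : Fin n) else f k0), ?_⟩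
    funext k
    have hlt : ((e ⟨f k, by simp [hS]⟩ : Fin S.card) : ℕ) < S.card := Fin.is_lt _
    simp [hlt]
  refine (Finset.card_le_card this).trans (Finset.card_image_le.trans ?_)
  simp

lemma abs_pow_le15 (x : ℝ) {j K : ℕ} (h : j ≤ K) : |x ^ j| ≤ 1 + |x| ^ K := by
  rw [abs_pow]
  rcases le_total |x| 1 with h1 | h1
  · have := pow_le_one₀ (n := j) (abs_nonneg x) h1
    have : 0 ≤ |x| ^ K := by positivity
    linarith
  · have := pow_le_pow_right₀ h1 h
    linarith

lemma integrable_pow15 (μ : Measure ℝ) [IsProbabilityMeasure μ] {K : ℕ}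
    (hi : Integrable (fun x => |x| ^ K) μ) {j : ℕ} (h : j ≤ K) :
    Integrable (fun x => x ^ j) μ := by
  refine ((integrable_const (1 : ℝ)).add hi).mono' (by fun_prop) ?_
  filter_upwards with x
  exact abs_pow_le15 x h

lemma moment_le15 (μ : Measure ℝ) [IsProbabilityMeasure μ] {K : ℕ}
    (hi : Integrable (fun x => |x| ^ K) μ) {L : ℝ} (hL : 1 + ∫ x, |x| ^ K ∂μ ≤ L)
    {j : ℕ} (h : j ≤ K) : |∫ x, x ^ j ∂μ| ≤ L ^ j := by
  have h0 : 0 ≤ ∫ x, |x| ^ K ∂μ := integral_nonneg fun x => by positivity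
  rcases Nat.eq_zero_or_pos j with rfl | hj
  · simp
  · calc |∫ x, x ^ j ∂μ| ≤ ∫ x, |x ^ j| ∂μ := abs_integral_le_integral_abs
      _ ≤ ∫ x, (1 + |x| ^ K) ∂μ := by
        refine integral_mono (integrable_pow15 μ hi h).abs ((integrable_const (1 : ℝ)).add hi) ?_
        intro x
        exact abs_pow_le15 x h
      _ = 1 + ∫ x, |x| ^ K ∂μ := by
        rw [integral_add (integrable_const (1 : ℝ)) hi]; simp
      _ ≤ L := hL
      _ ≤ L ^ j := le_self_pow₀ (by linarith) (by omega)

lemma fib_le15 {n K : ℕ} (f : Fin K → Fin n) (i : Fin n) : fib15 f i ≤ K := by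
  have := Finset.card_filter_le (Finset.univ : Finset (Fin K)) (fun k => f k = i)
  simpa [fib15] using this

lemma integral_form15 {n K : ℕ} (μ : Measure ℝ) [IsProbabilityMeasure μ]
    (hi : Integrable (fun x => |x| ^ K) μ) (w : (Fin K → Fin n) → ℝ) :
    ∫ z : Fin n → ℝ, (∑ f, w f * ∏ k, z (f k)) ∂ Measure.pi (fun _ : Fin n => μ) =
      ∑ f, w f * ∏ i, ∫ x, x ^ fib15 f i ∂μ := by
  simp_rw [prod_fib15]
  rw [integral_finsetSum]
  · refine Finset.sum_congr rfl fun f _ => ?_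
    rw [integral_const_mul]
    congr 1
    exact integral_fintype_prod_eq_prod (𝕜 := ℝ) (fun i (x : ℝ) => x ^ fib15 f i)
  · intro f _
    refine Integrable.const_mul ?_ _
    exact Integrable.fintype_prod (𝕜 := ℝ) (f := fun i (x : ℝ) => x ^ fib15 f i)
      (fun i => integrable_pow15 μ hi (fib_le15 f i))

open Classical in
lemma diff15 {n K : ℕ} (hn : 0 < n) (hK : 0 < K) (μ γ : Measure ℝ) [IsProbabilityMeasure μ]
    [IsProbabilityMeasure γ]
    (hi : Integrable (fun x => |x| ^ K) μ) (hi' : Integrable (fun x => |x| ^ K) γ)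
    (hm : ∫ x, x ∂μ = 0) (hm' : ∫ x, x ∂γ = 0)
    (hv : ∫ x, x ^ 2 ∂μ = 1) (hv' : ∫ x, x ^ 2 ∂γ = 1) {L : ℝ}
    (hL : 1 + ∫ x, |x| ^ K ∂μ ≤ L) (hL' : 1 + ∫ x, |x| ^ K ∂γ ≤ L)
    {D : ℝ} (hD : 0 ≤ D) {P : (Fin n → ℝ) → ℝ} (hP : IsForm15 n K D P) :
    |∫ z, P z ∂ Measure.pi (fun _ : Fin n => μ) - ∫ z, P z ∂ Measure.pi (fun _ : Fin n => γ)|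
      ≤ (2 * L ^ K * D * (((K - 1) / 2 : ℕ) : ℝ) ^ K) * (1 / Real.sqrt n) := by
  obtain ⟨w, hw, hP⟩ := hP
  simp_rw [hP]
  rw [integral_form15 μ hi, integral_form15 γ hi', ← Finset.sum_sub_distrib]
  set m := (K - 1) / 2 with hmdef
  have h0 : 0 ≤ ∫ x, |x| ^ K ∂μ := integral_nonneg fun x => by positivity
  have hL0 : 0 ≤ L := by linarith
  have hs : (0 : ℝ) < Real.sqrt n := Real.sqrt_pos.2 (by exact_mod_cast hn)
  have bnd : ∀ (ρ : Measure ℝ) [IsProbabilityMeasure ρ], Integrable (fun x => |x| ^ K) ρ →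
      1 + ∫ x, |x| ^ K ∂ρ ≤ L → ∀ f : Fin K → Fin n, |∏ i, ∫ x, x ^ fib15 f i ∂ρ| ≤ L ^ K := by
    intro ρ _ hρ hLρ f
    rw [Finset.abs_prod]
    calc _ ≤ ∏ i, L ^ fib15 f i := Finset.prod_le_prod (fun _ _ => abs_nonneg _)
          (fun i _ => moment_le15 ρ hρ hLρ (fib_le15 f i))
      _ = L ^ K := by rw [Finset.prod_pow_eq_pow_sum, sum_fib15]
  have hterm : ∀ f : Fin K → Fin n,
      |w f * ∏ i, ∫ x, x ^ fib15 f i ∂μ - w f * ∏ i, ∫ x, x ^ fib15 f i ∂γ| ≤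
      if (Finset.univ.image f).card ≤ m then 2 * L ^ K * D * (1 / Real.sqrt n) ^ K else 0 := by
    intro f
    split_ifs with hf
    · rw [← mul_sub, abs_mul]
      have h1 := abs_sub (∏ i, ∫ x, x ^ fib15 f i ∂μ) (∏ i, ∫ x, x ^ fib15 f i ∂γ)
      have h2 := bnd μ hi hL f
      have h3 := bnd γ hi' hL' f
      calc _ ≤ (D * (1 / Real.sqrt n) ^ K) * (L ^ K + L ^ K) :=
            mul_le_mul (hw f) (by linarith) (abs_nonneg _) (by positivity)
        _ = _ := by ring
    · have : ∏ i, ∫ x, x ^ fib15 f i ∂μ = ∏ i, ∫ x, x ^ fib15 f i ∂γ := by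
        by_cases h1 : ∃ i, fib15 f i = 1
        · obtain ⟨i, h1⟩ := h1
          rw [Finset.prod_eq_zero (Finset.mem_univ i) (by simp [h1, hm]),
            Finset.prod_eq_zero (Finset.mem_univ i) (by simp [h1, hm'])]
        · push Not at h1
          refine Finset.prod_congr rfl fun i _ => ?_
          have h3 : ¬ 3 ≤ fib15 f i := fun h => hf (bad15 f h1 ⟨i, h⟩)
          have : fib15 f i = 0 ∨ fib15 f i = 2 := by have := h1 i; omega
          rcases this with h | h
          · simp [h]
          · rw [h, hv, hv']
      rw [this]; simp
  refine (Finset.abs_sum_le_sum_abs _ _).trans ((Finset.sum_le_sum fun f _ => hterm f).trans ?_)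
  rw [← Finset.sum_filter, Finset.sum_const, nsmul_eq_mul]
  have hc : (((Finset.univ.filter fun f : Fin K → Fin n =>
      (Finset.univ.image f).card ≤ m).card : ℕ) : ℝ) ≤ (m : ℝ) ^ K * (n : ℝ) ^ m := by
    exact_mod_cast count15 n K m hK
  have hkey : (n : ℝ) ^ m * (1 / Real.sqrt n) ^ K ≤ 1 / Real.sqrt n := by
    have e : (n : ℝ) ^ m = Real.sqrt n ^ (2 * m) := by
      rw [pow_mul, Real.sq_sqrt (by positivity)]
    have h1 : 1 ≤ Real.sqrt n := by
      rw [Real.one_le_sqrt]; exact_mod_cast hn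
    rw [e, one_div_pow, mul_one_div, div_le_div_iff₀ (by positivity) hs, one_mul, ← pow_succ]
    exact pow_le_pow_right₀ h1 (by omega)
  calc _ ≤ ((m : ℝ) ^ K * (n : ℝ) ^ m) * (2 * L ^ K * D * (1 / Real.sqrt n) ^ K) :=
        mul_le_mul_of_nonneg_right hc (by positivity)
    _ = (2 * L ^ K * D * (m : ℝ) ^ K) * ((n : ℝ) ^ m * (1 / Real.sqrt n) ^ K) := by ring
    _ ≤ _ := mul_le_mul_of_nonneg_left hkey (by positivity)

theorem stmt15 (a b c : ℕ) (ha : 1 ≤ a) (hb : 1 ≤ b) (hc : 1 ≤ c) (C : ℝ) (hC : 0 < C)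
    (B : (n : ℕ) → Matrix (Fin n) (Fin n) ℝ)
    (hBsym : ∀ n, (B n).IsSymm)
    (hBbound : ∀ n, ∀ i j : Fin n, |B n i j| ≤ C / n)
    (ν : ℕ → Measure ℝ) (hprob : ∀ n, IsProbabilityMeasure (ν n))
    (hmean : ∀ n, ∫ x, x ∂ ν n = 0)
    (hvar : ∀ n, ∫ x, x ^ 2 ∂ ν n = 1)
    (hint : ∀ n, Integrable (fun x => |x| ^ (a + 2 * b + 2 * c)) (ν n))
    (hmom : ∃ M : ℝ, ∀ n, ∫ x, |x| ^ (a + 2 * b + 2 * c) ∂ ν n ≤ M) :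
    Tendsto (fun n : ℕ =>
        (∫ z : Fin n → ℝ,
            (Real.sqrt (n : ℝ) * ((∑ i, z i) / n)) ^ a * qf (B n) z ^ b *
              qf (B n * B n) z ^ c ∂ Measure.pi fun _ : Fin n => ν n) -
        (∫ z : Fin n → ℝ,
            (Real.sqrt (n : ℝ) * ((∑ i, z i) / n)) ^ a * qf (B n) z ^ b *
              qf (B n * B n) z ^ c ∂ Measure.pi fun _ : Fin n => gaussianReal 0 1))
      atTop (nhds 0) := by
  obtain ⟨M, hM⟩ := hmom
  set K := a + 2 * b + 2 * c with hKdef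
  have hg : Integrable (fun x => |x| ^ K) (gaussianReal 0 1) := by
    have := (memLp_id_gaussianReal (μ := 0) (v := 1) (K : NNReal)).integrable_norm_pow'
    simpa using this
  have hgm : ∫ x, x ∂ gaussianReal 0 1 = 0 := integral_id_gaussianReal
  have hgv : ∫ x, x ^ 2 ∂ gaussianReal 0 1 = 1 := by
    have h := variance_fun_id_gaussianReal (μ := 0) (v := 1)
    rw [variance_eq_integral (by fun_prop), hgm] at h
    simpa using h
  set L := max (1 + M) (1 + ∫ x, |x| ^ K ∂ gaussianReal 0 1) with hLdef
  set D := (1 : ℝ) ^ a * C ^ b * (C ^ 2) ^ c with hDdef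
  set m := (K - 1) / 2 with hmdef
  refine squeeze_zero_norm' (a := fun n : ℕ => (2 * L ^ K * D * (m : ℝ) ^ K) * (1 / Real.sqrt n))
    ?_ ?_
  · filter_upwards [eventually_gt_atTop 0] with n hn
    have := hprob n
    rw [Real.norm_eq_abs]
    refine diff15 hn (by omega) (ν n) (gaussianReal 0 1) (hint n) hg (hmean n) hgm (hvar n) hgv
      (le_trans (by linarith [hM n]) (le_max_left _ _)) (le_max_right _ _)
      (D := D) (by positivity) ?_
    have h := (((isForm15_mean n).pow a).mul ((isForm15_qf (B n) C (hBbound n)).pow b)).mul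
      ((isForm15_qf (B n * B n) (C ^ 2) (sq_bound15 (B n) C (hBbound n))).pow c)
    have e : a * 1 + b * 2 + c * 2 = K := by omega
    rwa [e] at h
  · have h1 : Tendsto (fun n : ℕ => 1 / Real.sqrt n) atTop (nhds 0) := by
      simp only [one_div]
      exact tendsto_inv_atTop_zero.comp
        (Real.tendsto_sqrt_atTop.comp tendsto_natCast_atTop_atTop)
    simpa using h1.const_mul (2 * L ^ K * D * (m : ℝ) ^ K)
end
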